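/- arXiv:1804.03374 — 3 statements merged into one kernel-verified Lean document; each statement's English description precedes it below -/
import Mathlib

section
/- For m > 0 and any smooth compactly supported f : ℝ^d → ℝ, the function F(t,x) = Q_t^{(m)}f(x) on (0,∞)×ℝ^d satisfies the elliptic equation Δ_x F + ∂²_{tt} F + ((1−m)/t) ∂_t F = 0. -/
open MeasureTheory

/-- The operator `Q_t^{(m)} f(x) = (1/c(m,d)) ∫ f(ty+x)(1+|y|²)^{-(m+d)/2} dy`. -/
noncomputable def Qop (d : ℕ) (m : ℝ) (f : EuclideanSpace ℝ (Fin d) → ℝ) (t : ℝ)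
    (x : EuclideanSpace ℝ (Fin d)) : ℝ :=
  (∫ y : EuclideanSpace ℝ (Fin d), f (t • y + x) * (1 + ‖y‖ ^ 2) ^ (-(m + d) / 2)) /
    ∫ y : EuclideanSpace ℝ (Fin d), (1 + ‖y‖ ^ 2) ^ (-(m + d) / 2)

/-!
Substituting `u = t y + x` writes `Q_t^{(m)} f(x)`, up to the constant `c(m,d)`, as the integral of
`f(u)` against the kernel `t ^ m (t² + |u - x|²)^{-(m+d)/2}`, and compactness of the support of `f`
allows differentiation under the integral sign. The kernel itself solves the equation by Weinstein's
correspondence: conjugation by `t ^ m` turns `∂²_{tt} + ((1 - m)/t) ∂_t` into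
`∂²_{tt} + ((1 + m)/t) ∂_t`, the radial Laplacian in "dimension" `m + 2`, while
`(t² + |z|²)^{-(m+d)/2}` is the Newtonian potential in "dimension" `d + m + 2`.
-/

open Function Module Set
open scoped RealInnerProductSpace Topology

section IntegralDeriv

theorem integrable_mul_of_continuous {X : Type*} [TopologicalSpace X] [T2Space X]
    [MeasurableSpace X] [OpensMeasurableSpace X] {μ : Measure X} {f g : X → ℝ}
    (hf : Integrable f μ) (hsupp : HasCompactSupport f) (hg : Continuous g) :
    Integrable (fun u => f u * g u) μ := by
  refine (integrableOn_iff_integrable_of_support_subset ?_).1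
    (hf.integrableOn.mul_continuousOn hg.continuousOn hsupp)
  exact (support_mul_subset_left f g).trans (subset_tsupport f)

variable {E F : Type*} [NormedAddCommGroup E] [NormedSpace ℝ E]

theorem contDiffAt_uncurry_deriv [NormedAddCommGroup F] [NormedSpace ℝ F] {φ : ℝ → E → F}
    {n k : WithTop ℕ∞} {r : ℝ} {u : E} (hφ : ContDiffAt ℝ n (uncurry φ) (r, u))
    (hkn : k + 1 ≤ n) : ContDiffAt ℝ k (uncurry fun r u => deriv (φ · u) r) (r, u) := by
  have hswap : ContDiffAt ℝ n (uncurry fun (p : ℝ × E) (r : ℝ) => φ r p.2) ((r, u), r) :=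
    hφ.comp ((r, u), r) (f := fun q : (ℝ × E) × ℝ => (q.2, q.1.2)) (by fun_prop)
  exact (hswap.fderiv contDiffAt_fst hkn).clm_apply contDiffAt_const

variable [MeasurableSpace E] [OpensMeasurableSpace E] {μ : Measure E} {f : E → ℝ}
  {φ : ℝ → E → ℝ} {S : Set ℝ} {r : ℝ}

theorem hasDerivAt_integral_mul_of_contDiffAt (hf : Integrable f μ) (hsupp : HasCompactSupport f)
    (hS : IsOpen S) (hφ : ∀ s ∈ S, ∀ u, ContDiffAt ℝ 1 (uncurry φ) (s, u)) (hr : r ∈ S) :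
    Integrable (fun u => f u * deriv (φ · u) r) μ ∧
      HasDerivAt (fun s => ∫ u, f u * φ s u ∂μ) (∫ u, f u * deriv (φ · u) r ∂μ) r := by
  have hslice (s : ℝ) (u : E) : ContDiffAt ℝ 1 (fun v : E => (s, v)) u := by fun_prop
  have hφ_cont (s : ℝ) (hs : s ∈ S) : Continuous (φ s) :=
    continuous_iff_continuousAt.2 fun u => ((hφ s hs u).comp u (hslice s u)).continuousAt
  have hderiv_cont : ContinuousOn (uncurry fun s u => deriv (φ · u) s) (S ×ˢ univ) :=
    fun p hp => (contDiffAt_uncurry_deriv (k := 0) (hφ p.1 hp.1 p.2)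
      (by simp)).continuousAt.continuousWithinAt
  have hderiv_slice : Continuous fun u => deriv (φ · u) r :=
    hderiv_cont.comp_continuous (f := fun u : E => (r, u)) (by fun_prop) fun _ => ⟨hr, trivial⟩
  obtain ⟨ε, hε, hball⟩ := Metric.nhds_basis_closedBall.mem_iff.1 (hS.mem_nhds hr)
  obtain ⟨C, hC⟩ := ((isCompact_closedBall r ε).prod hsupp).exists_bound_of_continuousOn
    (hderiv_cont.mono (prod_mono hball (subset_univ _)))
  refine hasDerivAt_integral_of_dominated_loc_of_deriv_le (bound := fun u => ‖f u‖ * C)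
    (F' := fun s u => f u * deriv (φ · u) s)
    (Metric.closedBall_mem_nhds r hε) ?_ (integrable_mul_of_continuous hf hsupp (hφ_cont r hr))
    (integrable_mul_of_continuous hf hsupp hderiv_slice).aestronglyMeasurable
    (.of_forall fun u s hs => ?_) (hf.norm.mul_const C) (.of_forall fun u s hs => ?_)
  · filter_upwards [hS.mem_nhds hr] with s hs
    exact (integrable_mul_of_continuous hf hsupp (hφ_cont s hs)).aestronglyMeasurable
  · rw [norm_mul]
    by_cases hu : u ∈ tsupport f
    · exact mul_le_mul_of_nonneg_left (hC (s, u) ⟨hs, hu⟩) (norm_nonneg _)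
    · simp [image_eq_zero_of_notMem_tsupport hu]
  · have hφ_diff : DifferentiableAt ℝ (φ · u) s :=
      ((hφ s (hball hs) u).comp s (f := fun s : ℝ => (s, u)) (by fun_prop)).differentiableAt
        one_ne_zero
    exact hφ_diff.hasDerivAt.const_mul (f u)

theorem deriv_deriv_integral_mul_of_contDiffAt (hf : Integrable f μ) (hsupp : HasCompactSupport f)
    (hS : IsOpen S) (hφ : ∀ s ∈ S, ∀ u, ContDiffAt ℝ 2 (uncurry φ) (s, u)) (hr : r ∈ S) :
    Integrable (fun u => f u * deriv (deriv (φ · u)) r) μ ∧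
      deriv (deriv fun s => ∫ u, f u * φ s u ∂μ) r = ∫ u, f u * deriv (deriv (φ · u)) r ∂μ := by
  have hderiv : deriv (fun s => ∫ u, f u * φ s u ∂μ) =ᶠ[𝓝 r]
      fun s => ∫ u, f u * deriv (φ · u) s ∂μ := by
    filter_upwards [hS.mem_nhds hr] with s hs
    exact (hasDerivAt_integral_mul_of_contDiffAt hf hsupp hS
      (fun s hs u => (hφ s hs u).of_le one_le_two) hs).2.deriv
  have hsecond := hasDerivAt_integral_mul_of_contDiffAt hf hsupp hS
    (fun s hs u => contDiffAt_uncurry_deriv (hφ s hs u) one_add_one_eq_two.le) hr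
  exact ⟨hsecond.1, hderiv.deriv_eq.trans hsecond.2.deriv⟩

end IntegralDeriv

section Kernel

theorem hasDerivAt_quadratic_rpow {a b c h : ℝ} (p : ℝ) (hq : a * h ^ 2 + b * h + c ≠ 0) :
    HasDerivAt (fun h => (a * h ^ 2 + b * h + c) ^ p)
      (p * (2 * a * h + b) * (a * h ^ 2 + b * h + c) ^ (p - 1)) h := by
  have hquad : HasDerivAt (fun h => a * h ^ 2 + b * h + c) (2 * a * h + b) h := by
    refine ((((hasDerivAt_id h).pow 2).const_mul a).add
      ((hasDerivAt_id h).const_mul b)).add_const c |>.congr_deriv ?_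
    simp only [id, Nat.cast_ofNat]
    ring
  exact (hquad.rpow_const (Or.inl hq)).congr_deriv (by ring)

theorem deriv_deriv_quadratic_rpow {a b c h : ℝ} (p : ℝ) (hq : a * h ^ 2 + b * h + c ≠ 0) :
    deriv (deriv fun h => (a * h ^ 2 + b * h + c) ^ p) h =
      2 * a * p * (a * h ^ 2 + b * h + c) ^ (p - 1) +
        p * (p - 1) * (2 * a * h + b) ^ 2 * (a * h ^ 2 + b * h + c) ^ (p - 2) := by
  have hfirst : deriv (fun h => (a * h ^ 2 + b * h + c) ^ p) =ᶠ[𝓝 h]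
      fun h => p * (2 * a * h + b) * (a * h ^ 2 + b * h + c) ^ (p - 1) := by
    have hcont : ContinuousAt (fun h => a * h ^ 2 + b * h + c) h := by fun_prop
    filter_upwards [hcont.eventually_ne hq] with s hs
    exact (hasDerivAt_quadratic_rpow p hs).deriv
  have hlin : HasDerivAt (fun h => p * (2 * a * h + b)) (p * (2 * a)) h := by
    simpa using (((hasDerivAt_id h).const_mul (2 * a)).add_const b).const_mul p
  rw [hfirst.deriv_eq, (hlin.fun_mul (hasDerivAt_quadratic_rpow (p - 1) hq)).deriv,
    show p - 1 - 1 = p - 2 by ring]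
  ring

theorem deriv_deriv_rpow_mul_add_deriv_rpow_mul {g : ℝ → ℝ} {t : ℝ} (m : ℝ) (ht : 0 < t)
    (hg : ContDiffAt ℝ 2 g t) :
    deriv (deriv fun s => s ^ m * g s) t + (1 - m) / t * deriv (fun s => s ^ m * g s) t =
      t ^ m * (deriv (deriv g) t + (1 + m) / t * deriv g t) := by
  have hpow (q : ℝ) {s : ℝ} (hs : 0 < s) : HasDerivAt (· ^ q) (q * s ^ (q - 1)) s :=
    Real.hasDerivAt_rpow_const (Or.inl hs.ne')
  have hfirst : deriv (fun s => s ^ m * g s) =ᶠ[𝓝 t]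
      fun s => m * s ^ (m - 1) * g s + s ^ m * deriv g s := by
    filter_upwards [Ioi_mem_nhds ht, hg.eventually (by simp)] with s hs hgs
    exact ((hpow m hs).mul (hgs.differentiableAt two_ne_zero).hasDerivAt).deriv
  have hg' : HasDerivAt g (deriv g t) t := (hg.differentiableAt two_ne_zero).hasDerivAt
  have hg'' : HasDerivAt (deriv g) (deriv (deriv g) t) t :=
    ((hg.derivWithin one_add_one_eq_two.le).differentiableAt one_ne_zero).hasDerivAt
  have hsecond := (((hpow (m - 1) ht).const_mul m).fun_mul hg').fun_add ((hpow m ht).fun_mul hg'')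
  have hm1 : t ^ m = t ^ (m - 1) * t := by rw [← Real.rpow_add_one ht.ne', sub_add_cancel]
  have hm2 : t ^ (m - 1) = t ^ (m - 1 - 1) * t := by
    rw [← Real.rpow_add_one ht.ne', sub_add_cancel]
  rw [hfirst.deriv_eq, hsecond.deriv, hfirst.eq_of_nhds, hm1, hm2]
  field_simp
  ring

variable {E : Type*} [NormedAddCommGroup E] [InnerProductSpace ℝ E]

theorem deriv_deriv_sq_add_norm_sub_smul_rpow {e z : E} {t : ℝ} (p : ℝ) (he : ‖e‖ = 1)
    (ht : t ≠ 0) :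
    deriv (deriv fun h : ℝ => (t ^ 2 + ‖z - h • e‖ ^ 2) ^ p) 0 =
      2 * p * (t ^ 2 + ‖z‖ ^ 2) ^ (p - 1) +
        4 * p * (p - 1) * ⟪z, e⟫ ^ 2 * (t ^ 2 + ‖z‖ ^ 2) ^ (p - 2) := by
  have hexpand (h : ℝ) :
      t ^ 2 + ‖z - h • e‖ ^ 2 = 1 * h ^ 2 + -2 * ⟪z, e⟫ * h + (t ^ 2 + ‖z‖ ^ 2) := by
    rw [norm_sub_sq_real, norm_smul, inner_smul_right, he, mul_one, Real.norm_eq_abs, sq_abs]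
    ring
  have hpos : 0 < t ^ 2 + ‖z‖ ^ 2 := by positivity
  have hq : (1 : ℝ) * 0 ^ 2 + -2 * ⟪z, e⟫ * 0 + (t ^ 2 + ‖z‖ ^ 2) = t ^ 2 + ‖z‖ ^ 2 := by ring
  simp only [hexpand]
  rw [deriv_deriv_quadratic_rpow p (hq.trans_ne hpos.ne'), hq]
  ring

variable {ι : Type*} [Fintype ι]

theorem sum_deriv_deriv_add_bessel_sq_add_norm_sq_rpow (b : OrthonormalBasis ι ℝ E) {t : ℝ}
    (ht : t ≠ 0) (z : E) (k p : ℝ) :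
    ∑ i, deriv (deriv fun h : ℝ => (t ^ 2 + ‖z - h • b i‖ ^ 2) ^ p) 0 +
        (deriv (deriv fun s : ℝ => (s ^ 2 + ‖z‖ ^ 2) ^ p) t +
          k / t * deriv (fun s : ℝ => (s ^ 2 + ‖z‖ ^ 2) ^ p) t) =
      2 * p * (2 * p + finrank ℝ E + k - 1) * (t ^ 2 + ‖z‖ ^ 2) ^ (p - 1) := by
  have hpos : 0 < t ^ 2 + ‖z‖ ^ 2 := by positivity
  have hquad (s : ℝ) : 1 * s ^ 2 + 0 * s + ‖z‖ ^ 2 = s ^ 2 + ‖z‖ ^ 2 := by ring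
  have hne : 1 * t ^ 2 + 0 * t + ‖z‖ ^ 2 ≠ 0 := (hquad t).symm ▸ hpos.ne'
  have htime := (hasDerivAt_quadratic_rpow p hne).deriv
  have htime' := deriv_deriv_quadratic_rpow p hne
  simp only [hquad] at htime htime'
  have hspace : ∑ i, deriv (deriv fun h : ℝ => (t ^ 2 + ‖z - h • b i‖ ^ 2) ^ p) 0 =
      finrank ℝ E * (2 * p * (t ^ 2 + ‖z‖ ^ 2) ^ (p - 1)) +
        4 * p * (p - 1) * ‖z‖ ^ 2 * (t ^ 2 + ‖z‖ ^ 2) ^ (p - 2) := by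
    simp only [deriv_deriv_sq_add_norm_sub_smul_rpow p (b.norm_eq_one _) ht,
      Finset.sum_add_distrib, ← Finset.sum_mul, ← Finset.mul_sum, b.sum_sq_inner_left,
      Finset.sum_const, Finset.card_univ, nsmul_eq_mul, finrank_eq_card_basis b.toBasis]
    ring
  have hpow : (t ^ 2 + ‖z‖ ^ 2) ^ (p - 1) =
      (t ^ 2 + ‖z‖ ^ 2) ^ (p - 2) * (t ^ 2 + ‖z‖ ^ 2) := by
    rw [← Real.rpow_add_one hpos.ne']
    ring_nf
  rw [hspace, htime, htime', hpow]
  field_simp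
  ring

/-- The unnormalized kernel of `Q_t^{(m)}` after the substitution `u = t y + x`, evaluated at
`z = u - x`. For `m = 1` it is the Poisson kernel of the half-space `(0, ∞) × E`. -/
noncomputable def extensionKernel (m t : ℝ) (z : E) : ℝ :=
  t ^ m * (t ^ 2 + ‖z‖ ^ 2) ^ (-(m + finrank ℝ E) / 2)

theorem contDiffAt_uncurry_extensionKernel (m : ℝ) {n : WithTop ℕ∞} {t : ℝ} (ht : t ≠ 0) (z : E) :
    ContDiffAt ℝ n (uncurry (extensionKernel m)) (t, z) := by
  have hne : t ^ 2 + ‖z‖ ^ 2 ≠ 0 := by positivity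
  have hnorm : ContDiffAt ℝ n (fun p : ℝ × E => p.1 ^ 2 + ‖p.2‖ ^ 2) (t, z) :=
    (contDiffAt_fst.pow 2).add (contDiffAt_snd.norm_sq ℝ)
  exact (contDiffAt_fst.rpow_const_of_ne ht).mul (hnorm.rpow_const_of_ne hne)

theorem extensionKernel_harmonic (m : ℝ) (b : OrthonormalBasis ι ℝ E) {t : ℝ} (ht : 0 < t) (z : E) :
    ∑ i, deriv (deriv fun h : ℝ => extensionKernel m t (z - h • b i)) 0 +
        deriv (deriv fun s => extensionKernel m s z) t +
        (1 - m) / t * deriv (fun s => extensionKernel m s z) t = 0 := by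
  have hne : t ^ 2 + ‖z‖ ^ 2 ≠ 0 := by positivity
  have hsmooth : ContDiffAt ℝ 2 (fun s : ℝ => (s ^ 2 + ‖z‖ ^ 2) ^ (-(m + finrank ℝ E) / 2)) t :=
    ContDiffAt.rpow_const_of_ne (by fun_prop) hne
  simp only [extensionKernel, deriv_const_mul_field']
  rw [← Finset.mul_sum, add_assoc, deriv_deriv_rpow_mul_add_deriv_rpow_mul m ht hsmooth, ← mul_add,
    sum_deriv_deriv_add_bessel_sq_add_norm_sq_rpow b ht.ne']
  ring

theorem pow_finrank_mul_extensionKernel_smul (m : ℝ) {t : ℝ} (ht : 0 < t) (y : E) :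
    t ^ finrank ℝ E * extensionKernel m t (t • y) =
      (1 + ‖y‖ ^ 2) ^ (-(m + finrank ℝ E) / 2) := by
  have hscale : t ^ 2 + ‖t • y‖ ^ 2 = t ^ 2 * (1 + ‖y‖ ^ 2) := by
    rw [norm_smul, mul_pow, Real.norm_eq_abs, sq_abs]
    ring
  have hexp : t ^ finrank ℝ E * (t ^ m * (t ^ 2) ^ (-(m + finrank ℝ E) / 2)) = 1 := by
    rw [← Real.rpow_natCast t 2, ← Real.rpow_mul ht.le, ← Real.rpow_natCast t (finrank ℝ E),
      ← Real.rpow_add ht, ← Real.rpow_add ht, ← Real.rpow_zero t]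
    congr 1
    push_cast
    ring
  rw [extensionKernel, hscale, Real.mul_rpow (by positivity) (by positivity), ← mul_assoc (t ^ m),
    ← mul_assoc, hexp, one_mul]

end Kernel

section Integral

variable {E : Type*} [NormedAddCommGroup E] [InnerProductSpace ℝ E] [MeasurableSpace E]

/-- The integral of `f` against the kernel `extensionKernel` centred at `x`; for Lebesgue measure
`μ` it is `c(m,d) Q_t^{(m)} f(x)`. -/
noncomputable def extensionIntegral (μ : Measure E) (m : ℝ) (f : E → ℝ) (t : ℝ) (x : E) : ℝ :=
  ∫ u, f u * extensionKernel m t (u - x) ∂μ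

theorem extensionIntegral_harmonic [OpensMeasurableSpace E] {ι : Type*} [Fintype ι]
    (b : OrthonormalBasis ι ℝ E) {μ : Measure E} (m : ℝ) {f : E → ℝ} (hf : Integrable f μ)
    (hsupp : HasCompactSupport f) {t : ℝ} (ht : 0 < t) (x : E) :
    ∑ i, deriv (deriv fun h : ℝ => extensionIntegral μ m f t (x + h • b i)) 0 +
        deriv (deriv fun s => extensionIntegral μ m f s x) t +
        (1 - m) / t * deriv (fun s => extensionIntegral μ m f s x) t = 0 := by
  have : FiniteDimensional ℝ E := b.toBasis.finiteDimensional_of_finite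
  have hspace (i : ι) (h : ℝ) (u : E) :
      ContDiffAt ℝ 2 (uncurry fun h u => extensionKernel m t (u - x - h • b i)) (h, u) :=
    (contDiffAt_uncurry_extensionKernel m ht.ne' _).comp (h, u)
      (f := fun p : ℝ × E => (t, p.2 - x - p.1 • b i)) (by fun_prop)
  have htime (s : ℝ) (hs : s ∈ Ioi 0) (u : E) :
      ContDiffAt ℝ 2 (uncurry fun s u => extensionKernel m s (u - x)) (s, u) :=
    (contDiffAt_uncurry_extensionKernel m (ne_of_gt hs) _).comp (s, u)
      (f := fun p : ℝ × E => (p.1, p.2 - x)) (by fun_prop)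
  have hxx (i : ι) := deriv_deriv_integral_mul_of_contDiffAt hf hsupp isOpen_univ
    (fun h _ u => hspace i h u) (mem_univ 0)
  have htt := deriv_deriv_integral_mul_of_contDiffAt hf hsupp isOpen_Ioi htime ht
  have ht' := hasDerivAt_integral_mul_of_contDiffAt hf hsupp isOpen_Ioi
    (fun s hs u => (htime s hs u).of_le one_le_two) ht
  have hsum := integrable_finsetSum Finset.univ fun i _ => (hxx i).1
  simp only [extensionIntegral, ← sub_sub]
  rw [Finset.sum_congr rfl fun i _ => (hxx i).2, htt.2, ht'.2.deriv,
    ← integral_finsetSum _ fun i _ => (hxx i).1, ← integral_const_mul,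
    ← integral_add hsum htt.1, ← integral_add (hsum.fun_add htt.1) (ht'.1.const_mul _)]
  refine integral_eq_zero_of_ae (.of_forall fun u => ?_)
  have hkernel := extensionKernel_harmonic m b ht (u - x)
  simp only [← Finset.mul_sum, Pi.zero_apply]
  linear_combination f u * hkernel

theorem integral_comp_smul_add_mul_eq_extensionIntegral [BorelSpace E] [FiniteDimensional ℝ E]
    (μ : Measure E) [μ.IsAddHaarMeasure] (m : ℝ) (f : E → ℝ) {t : ℝ} (ht : 0 < t) (x : E) :
    ∫ y, f (t • y + x) * (1 + ‖y‖ ^ 2) ^ (-(m + finrank ℝ E) / 2) ∂μ =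
      extensionIntegral μ m f t x := by
  let g : E → ℝ := fun u => f u * extensionKernel m t (u - x)
  calc ∫ y, f (t • y + x) * (1 + ‖y‖ ^ 2) ^ (-(m + finrank ℝ E) / 2) ∂μ
      = ∫ y, t ^ finrank ℝ E * g (t • y + x) ∂μ := by
        congr 1 with y
        simp only [g, add_sub_cancel_right, ← pow_finrank_mul_extensionKernel_smul m ht y]
        ring
    _ = t ^ finrank ℝ E * ∫ y, g (t • y + x) ∂μ := integral_const_mul _ _
    _ = ∫ u, g (u + x) ∂μ := by
        rw [Measure.integral_comp_smul_of_nonneg μ (fun u => g (u + x)) t (hR := ht.le),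
          smul_eq_mul, mul_inv_cancel_left₀ (by positivity)]
    _ = extensionIntegral μ m f t x := integral_add_right_eq_self g x

end Integral

theorem Qop_eq_inv_mul_extensionIntegral (d : ℕ) (m : ℝ) (f : EuclideanSpace ℝ (Fin d) → ℝ)
    {t : ℝ} (ht : 0 < t) (x : EuclideanSpace ℝ (Fin d)) :
    Qop d m f t x = (∫ y : EuclideanSpace ℝ (Fin d), (1 + ‖y‖ ^ 2) ^ (-(m + d) / 2))⁻¹ *
      extensionIntegral volume m f t x := by
  simp only [Qop, ← integral_comp_smul_add_mul_eq_extensionIntegral volume m f ht x,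
    finrank_euclideanSpace_fin, div_eq_inv_mul]

theorem Qop_harmonic_general (d : ℕ) (m : ℝ) (hm : 0 < m) (f : EuclideanSpace ℝ (Fin d) → ℝ)
    (hf : Integrable f) (hsupp : HasCompactSupport f) (t : ℝ) (ht : 0 < t)
    (x : EuclideanSpace ℝ (Fin d)) :
    (∑ i : Fin d,
        deriv (deriv fun h : ℝ => Qop d m f t (x + h • EuclideanSpace.single i 1)) 0)
      + deriv (deriv fun s : ℝ => Qop d m f s x) t
      + (1 - m) / t * deriv (fun s : ℝ => Qop d m f s x) t = 0 := by
  have hharm := extensionIntegral_harmonic (EuclideanSpace.basisFun (Fin d) ℝ) m hf hsupp ht x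
  simp only [EuclideanSpace.basisFun_apply] at hharm
  have htime : (fun s => Qop d m f s x) =ᶠ[𝓝 t] fun s =>
      (∫ y : EuclideanSpace ℝ (Fin d), (1 + ‖y‖ ^ 2) ^ (-(m + d) / 2))⁻¹ *
        extensionIntegral volume m f s x := by
    filter_upwards [Ioi_mem_nhds ht] with s hs
    exact Qop_eq_inv_mul_extensionIntegral d m f hs x
  simp only [htime.deriv.deriv_eq, htime.deriv_eq, Qop_eq_inv_mul_extensionIntegral d m f ht,
    deriv_const_mul_field']
  rw [← Finset.mul_sum, mul_left_comm, ← mul_add, ← mul_add, hharm, mul_zero]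

/-- Harmonicity of `Q_t^{(m)} f`: for `m > 0` and smooth compactly supported `f`,
the function `F(t,x) = Q_t^{(m)} f(x)` on `(0,∞)×ℝ^d` satisfies
`Δ_x F + ∂²_{tt} F + ((1−m)/t) ∂_t F = 0`. -/
theorem Qop_harmonic (d : ℕ) (hd : 1 ≤ d) (m : ℝ) (hm : 0 < m)
    (f : EuclideanSpace ℝ (Fin d) → ℝ) (hf : ContDiff ℝ (⊤ : ℕ∞) f)
    (hsupp : HasCompactSupport f) (t : ℝ) (ht : 0 < t) (x : EuclideanSpace ℝ (Fin d)) :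
    (∑ i : Fin d,
        deriv (deriv fun h : ℝ => Qop d m f t (x + h • EuclideanSpace.single i 1)) 0)
      + deriv (deriv fun s : ℝ => Qop d m f s x) t
      + (1 - m) / t * deriv (fun s : ℝ => Qop d m f s x) t = 0 :=
  Qop_harmonic_general d m hm f (hf.continuous.integrable_of_hasCompactSupport hsupp) hsupp t ht x
end

section
/- For m > 0, t > 0, the subordination identity holds: Q_t^{(m)}f(x) = ∫_0^∞ P_s f(x) σ_m(s,t) ds for every bounded continuous f : ℝ^d → ℝ, where P_s f(x) = ∫ f(y) exp(−|x−y|²/(4s)) (4πs)^{−d/2} dy is the heat semigroup (generator Δ) and σ_m(s,t) = (1/(2^m Γ(m/2))) t^m exp(−t²/(4s)) s^{−m/2−1}. -/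
open MeasureTheory

/-- The heat semigroup on `ℝ^d` (generator the Laplacian `Δ`):
`P_s f(x) = ∫ f(y) exp(−|x−y|²/(4s)) (4πs)^{−d/2} dy`. -/
noncomputable def heatOp (d : ℕ) (s : ℝ) (f : EuclideanSpace ℝ (Fin d) → ℝ)
    (x : EuclideanSpace ℝ (Fin d)) : ℝ :=
  ∫ y : EuclideanSpace ℝ (Fin d),
    f y * Real.exp (-‖x - y‖ ^ 2 / (4 * s)) / (4 * Real.pi * s) ^ ((d : ℝ) / 2)

/-- The Bessel hitting-time density
`σ_m(s,t) = (1/(2^m Γ(m/2))) t^m exp(−t²/(4s)) s^{−m/2−1}`. -/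
noncomputable def besselHittingDensity (m t s : ℝ) : ℝ :=
  (1 / (2 ^ m * Real.Gamma (m / 2))) * t ^ m * Real.exp (-t ^ 2 / (4 * s)) *
    s ^ (-m / 2 - 1)

/-!
For a fixed displacement `v`, the product of the heat kernel and the Bessel hitting density is, as a
function of `s`, a multiple of an inverse Gamma density, so integrating out `s` yields the explicit
kernel `K_t(v) = Γ((m+d)/2) / (π^{d/2} Γ(m/2)) · t^m (t² + |v|²)^{-(m+d)/2}`. All kernels being
nonnegative, Tonelli gives `∫_0^∞ P_s f(x) σ_m(s,t) ds = ∫ K_t(v) f(v + x) dv`. The case `f = 1`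
shows `∫ K_t = 1`, which evaluates the normalizing constant of `Q_t`, and the substitution `v = t y`
turns the right-hand side into `Q_t f(x)`.
-/

open Real Set Module

section InverseGamma

variable {a p : ℝ}

lemma integral_exp_neg_div_mul_rpow (ha : 0 < a) (hp : 0 < p) :
    ∫ s in Ioi 0, exp (-a / s) * s ^ (-p - 1) = a ^ (-p) * Gamma p := by
  have comp_inv (s : ℝ) (hs : s ∈ Ioi 0) :
      (|(-1 : ℝ)| * s ^ ((-1 : ℝ) - 1)) • ((s ^ (-1 : ℝ)) ^ (p - 1) * exp (-(a * s ^ (-1 : ℝ)))) =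
        exp (-a / s) * s ^ (-p - 1) := by
    rw [← rpow_mul (le_of_lt hs), rpow_neg_one, abs_neg, abs_one, one_mul, smul_eq_mul,
      ← mul_assoc, ← rpow_add hs, mul_comm]
    congr 2 <;> ring
  rw [← setIntegral_congr_fun measurableSet_Ioi comp_inv,
    integral_comp_rpow_Ioi (fun u => u ^ (p - 1) * exp (-(a * u))) (by norm_num),
    integral_rpow_mul_exp_neg_mul_Ioi hp ha, one_div, inv_rpow ha.le, rpow_neg ha.le]

lemma integrableOn_exp_neg_div_mul_rpow (ha : 0 < a) (hp : 0 < p) :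
    IntegrableOn (fun s => exp (-a / s) * s ^ (-p - 1)) (Ioi 0) := by
  refine Integrable.of_integral_ne_zero ?_
  rw [integral_exp_neg_div_mul_rpow ha hp]
  have := Gamma_pos_of_pos hp
  positivity

end InverseGamma

lemma integral_integral_smul_of_nonneg {α β E : Type*} [MeasurableSpace α] [MeasurableSpace β]
    [NormedAddCommGroup E] [NormedSpace ℝ E] [CompleteSpace E] {μ : Measure α} {ν : Measure β}
    [SFinite μ] [SFinite ν] {k : α → β → ℝ} {f : β → E}
    (hk : AEStronglyMeasurable (Function.uncurry k) (μ.prod ν)) (hk₀ : ∀ᵐ a ∂μ, ∀ b, 0 ≤ k a b)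
    (hki : ∀ b, Integrable (k · b) μ) (hf : AEStronglyMeasurable f ν)
    (hkf : Integrable (fun b => (∫ a, k a b ∂μ) • f b) ν) :
    ∫ a, ∫ b, k a b • f b ∂ν ∂μ = ∫ b, (∫ a, k a b ∂μ) • f b ∂ν := by
  have norm_integral (b : β) : ∫ a, ‖k a b • f b‖ ∂μ = ‖(∫ a, k a b ∂μ) • f b‖ := by
    have h₀ : ∀ᵐ a ∂μ, 0 ≤ k a b := hk₀.mono fun _ h => h b
    rw [norm_smul, norm_of_nonneg (integral_nonneg_of_ae h₀), ← integral_mul_const]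
    refine integral_congr_ae ?_
    filter_upwards [h₀] with a ha
    rw [norm_smul, norm_of_nonneg ha]
  have integrable_prod : Integrable (fun z : α × β => k z.1 z.2 • f z.2) (μ.prod ν) := by
    refine (integrable_prod_iff' (hk.smul hf.comp_snd)).2
      ⟨.of_forall fun b => (hki b).smul_const (f b), ?_⟩
    exact hkf.norm.congr (.of_forall fun b => (norm_integral b).symm)
  rw [integral_integral_swap integrable_prod]
  exact integral_congr_ae (.of_forall fun b => integral_smul_const (k · b) (f b))

section Kernels

variable {V : Type*} [NormedAddCommGroup V] [InnerProductSpace ℝ V]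

/-- The Gaussian convolution kernel of the heat semigroup with generator `Δ` (not `Δ / 2`). -/
noncomputable def heatKernel (s : ℝ) (v : V) : ℝ :=
  exp (-‖v‖ ^ 2 / (4 * s)) / (4 * π * s) ^ ((finrank ℝ V : ℝ) / 2)

/-- The convolution kernel of `Q_t^{(m)}`; for `m = 1` it is the classical Poisson kernel of the
upper half-space `V × (0, ∞)`. -/
noncomputable def generalizedPoissonKernel (m t : ℝ) (v : V) : ℝ :=
  Gamma ((m + finrank ℝ V) / 2) / (π ^ ((finrank ℝ V : ℝ) / 2) * Gamma (m / 2)) *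
    t ^ m * (t ^ 2 + ‖v‖ ^ 2) ^ (-(m + finrank ℝ V) / 2)

variable {m t : ℝ}

lemma heatKernel_nonneg {s : ℝ} (hs : 0 ≤ s) (v : V) : 0 ≤ heatKernel s v := by
  unfold heatKernel
  positivity

lemma besselHittingDensity_nonneg {s : ℝ} (hm : 0 ≤ m) (ht : 0 ≤ t) (hs : 0 ≤ s) :
    0 ≤ besselHittingDensity m t s := by
  have := Gamma_nonneg_of_nonneg (div_nonneg hm two_pos.le)
  unfold besselHittingDensity
  positivity

lemma generalizedPoissonKernel_pos (hm : 0 < m) (ht : 0 < t) (v : V) :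
    0 < generalizedPoissonKernel m t v := by
  have := Gamma_pos_of_pos (half_pos hm)
  have : 0 < Gamma ((m + finrank ℝ V) / 2) := Gamma_pos_of_pos (by positivity)
  unfold generalizedPoissonKernel
  positivity

lemma continuous_generalizedPoissonKernel (ht : t ≠ 0) :
    Continuous (generalizedPoissonKernel m t : V → ℝ) := by
  have base_ne_zero (v : V) : t ^ 2 + ‖v‖ ^ 2 ≠ 0 := by positivity
  unfold generalizedPoissonKernel
  exact continuous_const.mul
    (Continuous.rpow_const (by fun_prop) fun v => .inl (base_ne_zero v))

lemma generalizedPoissonKernel_one (v : V) :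
    generalizedPoissonKernel m 1 v =
      Gamma ((m + finrank ℝ V) / 2) / (π ^ ((finrank ℝ V : ℝ) / 2) * Gamma (m / 2)) *
        (1 + ‖v‖ ^ 2) ^ (-(m + finrank ℝ V) / 2) := by
  simp [generalizedPoissonKernel]

lemma generalizedPoissonKernel_smul (ht : 0 < t) (v : V) :
    generalizedPoissonKernel m t (t • v) =
      (t ^ finrank ℝ V)⁻¹ * generalizedPoissonKernel m 1 v := by
  have scaling : (t ^ 2 + ‖t • v‖ ^ 2) ^ (-(m + finrank ℝ V) / 2) =
      (t ^ m)⁻¹ * (t ^ finrank ℝ V)⁻¹ * (1 + ‖v‖ ^ 2) ^ (-(m + finrank ℝ V) / 2) := by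
    rw [norm_smul, norm_of_nonneg ht.le,
      show t ^ 2 + (t * ‖v‖) ^ 2 = t ^ (2 : ℝ) * (1 + ‖v‖ ^ 2) by rw [rpow_two]; ring,
      mul_rpow (by positivity) (by positivity), ← rpow_mul ht.le, mul_div_cancel₀ _ two_ne_zero,
      rpow_neg ht.le, rpow_add ht, rpow_natCast, mul_inv]
  rw [generalizedPoissonKernel_one, generalizedPoissonKernel, scaling]
  field_simp

lemma heatKernel_mul_besselHittingDensity {s : ℝ} (hs : 0 < s) (v : V) :
    heatKernel s v * besselHittingDensity m t s =
      t ^ m / (2 ^ m * Gamma (m / 2) * (4 * π) ^ ((finrank ℝ V : ℝ) / 2)) *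
        (exp (-((t ^ 2 + ‖v‖ ^ 2) / 4) / s) * s ^ (-((m + finrank ℝ V) / 2) - 1)) := by
  have hexp : exp (-((t ^ 2 + ‖v‖ ^ 2) / 4) / s) =
      exp (-‖v‖ ^ 2 / (4 * s)) * exp (-t ^ 2 / (4 * s)) := by
    rw [← exp_add]
    congr 1
    field_simp
    ring
  have hpow : s ^ (-((m + finrank ℝ V) / 2) - 1) =
      s ^ (-m / 2 - 1) / s ^ ((finrank ℝ V : ℝ) / 2) := by
    rw [← rpow_sub hs]
    congr 1
    ring
  rw [hexp, hpow, heatKernel, besselHittingDensity, mul_rpow (by positivity) hs.le]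
  ring

lemma integrableOn_heatKernel_mul_besselHittingDensity (hm : 0 < m) (ht : t ≠ 0) (v : V) :
    IntegrableOn (fun s => heatKernel s v * besselHittingDensity m t s) (Ioi 0) := by
  refine IntegrableOn.congr_fun ?_
    (fun s hs => (heatKernel_mul_besselHittingDensity hs v).symm) measurableSet_Ioi
  exact (integrableOn_exp_neg_div_mul_rpow (by positivity) (by positivity)).const_mul _

lemma integral_heatKernel_mul_besselHittingDensity (hm : 0 < m) (ht : t ≠ 0) (v : V) :
    ∫ s in Ioi 0, heatKernel s v * besselHittingDensity m t s =
      generalizedPoissonKernel m t v := by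
  rw [setIntegral_congr_fun measurableSet_Ioi
      fun s hs => heatKernel_mul_besselHittingDensity hs v,
    integral_const_mul, integral_exp_neg_div_mul_rpow (by positivity) (by positivity)]
  have four_rpow (r : ℝ) : (4 : ℝ) ^ (r / 2) = 2 ^ r := by
    rw [show (4 : ℝ) = 2 ^ (2 : ℝ) by norm_num, ← rpow_mul two_pos.le,
      mul_div_cancel₀ _ two_ne_zero]
  rw [generalizedPoissonKernel, div_rpow (by positivity) four_pos.le, ← neg_div, four_rpow,
    mul_rpow four_pos.le pi_pos.le, four_rpow, rpow_neg two_pos.le, rpow_add two_pos]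
  field_simp

lemma integral_besselHittingDensity (hm : 0 < m) (ht : 0 < t) :
    ∫ s in Ioi 0, besselHittingDensity m t s = 1 := by
  -- In dimension zero the heat kernel is identically `1`.
  have h := integral_heatKernel_mul_besselHittingDensity hm ht.ne' (0 : EuclideanSpace ℝ (Fin 0))
  have hΓ := (Gamma_pos_of_pos (half_pos hm)).ne'
  have hpow : (t ^ 2) ^ (-m / 2) = (t ^ m)⁻¹ := by
    rw [← rpow_two, ← rpow_mul ht.le, mul_div_cancel₀ _ two_ne_zero, rpow_neg ht.le]
  simpa [heatKernel, generalizedPoissonKernel, hpow, hΓ, (rpow_pos_of_pos ht m).ne'] using h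

variable [FiniteDimensional ℝ V] [MeasurableSpace V] [BorelSpace V]

lemma integral_heatKernel {s : ℝ} (hs : 0 < s) : ∫ v : V, heatKernel s v = 1 := by
  have gaussian := GaussianFourier.integral_rexp_neg_mul_sq_norm (V := V) (b := (4 * s)⁻¹)
    (by positivity)
  simp_rw [heatKernel, integral_div, div_eq_inv_mul (-‖_‖ ^ 2), mul_neg, ← neg_mul]
  rw [gaussian, div_inv_eq_mul, ← mul_assoc, mul_comm π 4]
  exact div_self (by positivity)

lemma integrable_generalizedPoissonKernel (hm : 0 < m) (ht : 0 < t) :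
    Integrable (generalizedPoissonKernel m t : V → ℝ) := by
  rw [← integrable_comp_smul_iff volume _ ht.ne']
  simp_rw [generalizedPoissonKernel_smul ht, generalizedPoissonKernel_one]
  exact ((integrable_rpow_neg_one_add_norm_sq (by simpa using hm)).const_mul _).const_mul _

lemma integral_besselHittingDensity_smul_integral_heatKernel_smul {E : Type*}
    [NormedAddCommGroup E] [NormedSpace ℝ E] [CompleteSpace E] {f : V → E} (hm : 0 < m) (ht : 0 < t)
    (hf : Integrable fun v => generalizedPoissonKernel m t v • f v) :
    ∫ s in Ioi 0, besselHittingDensity m t s • ∫ v, heatKernel s v • f v =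
      ∫ v, generalizedPoissonKernel m t v • f v := by
  have aestronglyMeasurable_f : AEStronglyMeasurable f := by
    have h := (continuous_generalizedPoissonKernel (m := m) (V := V) ht.ne').inv₀
      fun v => (generalizedPoissonKernel_pos hm ht v).ne'
    refine (h.aestronglyMeasurable.smul hf.aestronglyMeasurable).congr (.of_forall fun v => ?_)
    exact inv_smul_smul₀ (generalizedPoissonKernel_pos hm ht v).ne' (f v)
  have measurable_kernel :
      Measurable fun z : ℝ × V => heatKernel z.1 z.2 * besselHittingDensity m t z.1 := by
    unfold heatKernel besselHittingDensity
    fun_prop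
  simp_rw [← integral_heatKernel_mul_besselHittingDensity hm ht.ne'] at hf ⊢
  rw [← integral_integral_smul_of_nonneg measurable_kernel.aestronglyMeasurable ?_
    (integrableOn_heatKernel_mul_besselHittingDensity hm ht.ne') aestronglyMeasurable_f hf]
  · simp_rw [← integral_smul, smul_smul, mul_comm]
  · filter_upwards [ae_restrict_mem measurableSet_Ioi] with s hs v
    exact mul_nonneg (heatKernel_nonneg (le_of_lt hs) v)
      (besselHittingDensity_nonneg hm.le ht.le (le_of_lt hs))

lemma integral_generalizedPoissonKernel (hm : 0 < m) (ht : 0 < t) :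
    ∫ v : V, generalizedPoissonKernel m t v = 1 := by
  have h := integral_besselHittingDensity_smul_integral_heatKernel_smul (V := V)
    (f := fun _ => (1 : ℝ)) hm ht (by simpa using integrable_generalizedPoissonKernel hm ht)
  simp only [smul_eq_mul, mul_one] at h
  rw [← h, ← integral_besselHittingDensity hm ht]
  refine setIntegral_congr_fun measurableSet_Ioi fun s hs => ?_
  simp only [integral_heatKernel hs, mul_one]

lemma integral_one_add_norm_sq_rpow (hm : 0 < m) :
    ∫ v : V, (1 + ‖v‖ ^ 2) ^ (-(m + finrank ℝ V) / 2) =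
      π ^ ((finrank ℝ V : ℝ) / 2) * Gamma (m / 2) / Gamma ((m + finrank ℝ V) / 2) := by
  have h := integral_generalizedPoissonKernel (V := V) hm one_pos
  simp_rw [generalizedPoissonKernel_one, integral_const_mul] at h
  rw [eq_inv_of_mul_eq_one_right h, inv_div]

lemma integrable_mul_one_add_norm_sq_rpow {g : V → ℝ} {C : ℝ} (hm : 0 < m)
    (hg : AEStronglyMeasurable g) (hC : ∀ v, |g v| ≤ C) :
    Integrable fun v => g v * (1 + ‖v‖ ^ 2) ^ (-(m + finrank ℝ V) / 2) :=
  (integrable_rpow_neg_one_add_norm_sq (by simpa using hm)).bdd_mul hg (.of_forall hC)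

end Kernels

section Operators

variable {d : ℕ} {m t : ℝ} {f : EuclideanSpace ℝ (Fin d) → ℝ} {x : EuclideanSpace ℝ (Fin d)}

lemma heatOp_eq_integral_heatKernel (s : ℝ) :
    heatOp d s f x = ∫ v, heatKernel s v * f (v + x) := by
  rw [heatOp, ← integral_add_right_eq_self _ x]
  refine integral_congr_ae (.of_forall fun v => ?_)
  simp only [heatKernel, finrank_euclideanSpace_fin, sub_add_cancel_right, norm_neg]
  ring

lemma generalizedPoissonKernel_smul_mul (ht : 0 < t) (y : EuclideanSpace ℝ (Fin d)) :
    generalizedPoissonKernel m t (t • y) * f (t • y + x) =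
      (t ^ d)⁻¹ * (Gamma ((m + d) / 2) / (π ^ ((d : ℝ) / 2) * Gamma (m / 2))) *
        (f (t • y + x) * (1 + ‖y‖ ^ 2) ^ (-(m + d) / 2)) := by
  rw [generalizedPoissonKernel_smul ht, generalizedPoissonKernel_one, finrank_euclideanSpace_fin]
  ring

lemma Qop_eq_integral_generalizedPoissonKernel (hm : 0 < m) (ht : 0 < t) :
    Qop d m f t x = ∫ v, generalizedPoissonKernel m t v * f (v + x) := by
  have normalization := integral_one_add_norm_sq_rpow (V := EuclideanSpace ℝ (Fin d)) hm
  have scaling := Measure.integral_comp_smul_of_nonneg volume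
    (fun v => generalizedPoissonKernel m t v * f (v + x)) t (hR := ht.le)
  simp_rw [generalizedPoissonKernel_smul_mul ht, integral_const_mul, smul_eq_mul,
    finrank_euclideanSpace_fin, mul_assoc] at scaling
  rw [finrank_euclideanSpace_fin] at normalization
  rw [← mul_left_cancel₀ (inv_ne_zero (pow_ne_zero d ht.ne')) scaling, Qop, normalization,
    div_eq_inv_mul, inv_div]

lemma integrable_generalizedPoissonKernel_mul_iff (hm : 0 < m) (ht : 0 < t) :
    Integrable (fun v => generalizedPoissonKernel m t v * f (v + x)) ↔
      Integrable fun y => f (t • y + x) * (1 + ‖y‖ ^ 2) ^ (-(m + d) / 2) := by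
  have := Gamma_pos_of_pos (half_pos hm)
  have : 0 < Gamma ((m + d) / 2) := Gamma_pos_of_pos (by positivity)
  rw [← integrable_comp_smul_iff volume _ ht.ne']
  simp_rw [generalizedPoissonKernel_smul_mul ht]
  exact integrable_const_mul_iff (IsUnit.mk0 _ (by positivity)) _

theorem Qop_subordination_general (hm : 0 < m) (ht : 0 < t)
    (hf : Integrable fun y => f (t • y + x) * (1 + ‖y‖ ^ 2) ^ (-(m + d) / 2)) :
    Qop d m f t x = ∫ s in Ioi 0, heatOp d s f x * besselHittingDensity m t s := by
  rw [← integrable_generalizedPoissonKernel_mul_iff hm ht] at hf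
  simp_rw [Qop_eq_integral_generalizedPoissonKernel hm ht, heatOp_eq_integral_heatKernel]
  simpa only [smul_eq_mul, mul_comm (besselHittingDensity _ _ _)] using
    (integral_besselHittingDensity_smul_integral_heatKernel_smul hm ht hf).symm

end Operators

/-- Subordination identity: for `m > 0`, `t > 0`, and every bounded continuous `f`,
`Q_t^{(m)} f(x) = ∫_0^∞ P_s f(x) σ_m(s,t) ds`. -/
theorem Qop_subordination (d : ℕ) (hd : 1 ≤ d) (m t : ℝ) (hm : 0 < m) (ht : 0 < t)
    (f : EuclideanSpace ℝ (Fin d) → ℝ) (hf : Continuous f) (hb : ∃ C, ∀ y, |f y| ≤ C)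
    (x : EuclideanSpace ℝ (Fin d)) :
    Qop d m f t x =
      ∫ s in Set.Ioi (0 : ℝ), heatOp d s f x * besselHittingDensity m t s := by
  obtain ⟨C, hC⟩ := hb
  have hfi := integrable_mul_one_add_norm_sq_rpow (g := fun y => f (t • y + x)) hm
    (by fun_prop) fun _ => hC _
  exact Qop_subordination_general hm ht (by simpa using hfi)
end

section
/- (Beckner inequality for the Cauchy distribution) For b ≥ d+1, p ∈ [1 + 1/(b−d), 2], and any smooth nonnegative f with the relevant integrals finite, (p/(p−1))[∫ f² dν_b − (∫ f^{2/p} dν_b)^p] ≤ (1/(b−1)) ∫ |∇f|² (1+|y|²) dν_b. -/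
open MeasureTheory

/-- The generalized Cauchy probability measure `ν_b` on `ℝ^d`, with density
proportional to `(1+|y|²)^{-b}`. -/
noncomputable def cauchyMeasure (d : ℕ) (b : ℝ) : Measure (EuclideanSpace ℝ (Fin d)) :=
  volume.withDensity fun y =>
    ENNReal.ofReal ((1 + ‖y‖ ^ 2) ^ (-b) /
      ∫ z : EuclideanSpace ℝ (Fin d), (1 + ‖z‖ ^ 2) ^ (-b))

/-! Extend the inequality to the half-space of points `(z, w)` with `w ≥ 0`, replacing `ν_b` by its
image under `y ↦ z + w y`, and write `f ^ 2 = g ^ p`. The difference `D(z, w)` of the two sides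
vanishes at `w = 0` and is asymptotically nonnegative at infinity, so it is enough that
`L D ≤ 0` for an operator `L` with a minimum principle. Take
`L = Δ_z + ∂_w² + ((1 - α) / w) ∂_w` with `α = 2b - d`. The `ν_b`-averages are `L`-harmonic, and
`L` maps `w²` times the `ν_{b-1}`-average of a function to a negative multiple of its
`ν_b`-average. Hence `L D ≤ 0` says that the `ν_b`-average `U` of `g` satisfies
`U ^ (p - 2) |∇U|² ≤` the `ν_b`-average of `g ^ (p - 2) |∇g|²`. By Cauchy–Schwarz and the
three-term AM–GM inequality this reduces to `∫ |a + s y| ^ (2(b - d)) dν_b = 1` for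
`|a|² + s² = 1`, which is the change of variables given by the inversion in the unit sphere. The
inequality is `D(0, 1) ≥ 0`; the positivity and support conditions on `f` are removed by
approximation. -/

open Filter Set
open scoped Topology RealInnerProductSpace Gradient

section GeneralLemmas

lemma integral_pos_of_forall_pos {α : Type*} [MeasurableSpace α] {μ : Measure α} [NeZero μ]
    {f : α → ℝ} (hf : ∀ x, 0 < f x) (hfi : Integrable f μ) : 0 < ∫ x, f x ∂μ := by
  rw [integral_pos_iff_support_of_nonneg (fun x => (hf x).le) hfi,
    Function.support_eq_univ fun x => (hf x).ne']
  exact Measure.measure_univ_pos.2 (NeZero.ne μ)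

lemma sq_integral_inner_le {α E : Type*} [MeasurableSpace α] {μ : Measure α}
    [NormedAddCommGroup E] [InnerProductSpace ℝ E] {r : α → ℝ} {u v : α → E}
    (hr : ∀ x, 0 < r x) (hu : Integrable (fun x => r x * ‖u x‖ ^ 2) μ)
    (huv : Integrable (fun x => ⟪u x, v x⟫) μ)
    (hv : Integrable (fun x => (r x)⁻¹ * ‖v x‖ ^ 2) μ) :
    (∫ x, ⟪u x, v x⟫ ∂μ) ^ 2 ≤
      (∫ x, r x * ‖u x‖ ^ 2 ∂μ) * ∫ x, (r x)⁻¹ * ‖v x‖ ^ 2 ∂μ := by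
  have expand (t : ℝ) (x : α) : r x * ‖t • u x + (r x)⁻¹ • v x‖ ^ 2 =
      t * t * (r x * ‖u x‖ ^ 2) + 2 * t * ⟪u x, v x⟫ + (r x)⁻¹ * ‖v x‖ ^ 2 := by
    have := (hr x).ne'
    rw [norm_add_sq_real, norm_smul, norm_smul, mul_pow, mul_pow, Real.norm_eq_abs,
      Real.norm_eq_abs, sq_abs, sq_abs, real_inner_smul_left, real_inner_smul_right]
    field_simp
  have nonneg (t : ℝ) : 0 ≤ (∫ x, r x * ‖u x‖ ^ 2 ∂μ) * (t * t) +
      2 * (∫ x, ⟪u x, v x⟫ ∂μ) * t + ∫ x, (r x)⁻¹ * ‖v x‖ ^ 2 ∂μ := by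
    have h : 0 ≤ ∫ x, r x * ‖t • u x + (r x)⁻¹ • v x‖ ^ 2 ∂μ :=
      integral_nonneg fun x => by have := hr x; positivity
    have hsum : Integrable (fun x => t * t * (r x * ‖u x‖ ^ 2) + 2 * t * ⟪u x, v x⟫) μ :=
      (hu.const_mul _).add (huv.const_mul _)
    simp only [expand] at h
    rw [integral_add hsum hv, integral_add (hu.const_mul _) (huv.const_mul _),
      integral_const_mul, integral_const_mul] at h
    linarith
  have := discrim_le_zero nonneg
  rw [discrim] at this
  linarith

end GeneralLemmas

section Inversion

open EuclideanGeometry Module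

variable {E : Type*} [NormedAddCommGroup E] [InnerProductSpace ℝ E]

lemma inversion_zero_one_eq (x : E) : inversion 0 1 x = (1 / ‖x‖) ^ 2 • x := by
  simp [inversion]

lemma norm_inversion_sub_sq {a x : E} (hx : x ≠ 0) :
    ‖inversion 0 1 x - a‖ ^ 2 = (1 - 2 * ⟪x, a⟫ + ‖a‖ ^ 2 * ‖x‖ ^ 2) / ‖x‖ ^ 2 := by
  have := norm_ne_zero_iff.2 hx
  rw [inversion_zero_one_eq, norm_sub_sq_real, norm_smul, real_inner_smul_left, Real.norm_eq_abs,
    abs_of_nonneg (by positivity)]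
  field_simp

lemma image_inversion_compl_singleton_zero :
    inversion (0 : E) 1 '' {0}ᶜ = {0}ᶜ := by
  rw [(inversion_involutive (0 : E) one_ne_zero).image_eq_preimage_symm]
  ext x
  simp

lemma abs_det_smul_reflection [FiniteDimensional ℝ E] (K : Submodule ℝ E) (c : ℝ) :
    |(c • ((K.reflection : E ≃ₗᵢ[ℝ] E) : E →L[ℝ] E)).det| = |c| ^ finrank ℝ E := by
  have h : |LinearMap.det K.reflection.toLinearMap| = 1 :=
    (congrArg abs K.det_reflection).trans (by simp)
  rw [ContinuousLinearMap.det, ContinuousLinearMap.toLinearMap_smul, LinearMap.det_smul, abs_mul,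
    abs_pow]
  exact (congrArg (|c| ^ finrank ℝ E * ·) h).trans (mul_one _)

variable [FiniteDimensional ℝ E] [MeasurableSpace E] [BorelSpace E]

lemma integral_comp_inversion [Nontrivial E] {G : Type*} [NormedAddCommGroup G]
    [NormedSpace ℝ G] (F : E → G) :
    ∫ x : E, (‖x‖ ^ 2)⁻¹ ^ finrank ℝ E • F (inversion 0 1 x) = ∫ x, F x := by
  have change := integral_image_eq_integral_abs_det_fderiv_smul (volume : Measure E)
    (measurableSet_singleton 0).compl
    (fun x hx => (hasFDerivAt_inversion (R := 1) (by simpa using hx)).hasFDerivWithinAt)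
    (inversion_injective (0 : E) one_ne_zero).injOn F
  rw [image_inversion_compl_singleton_zero, restrict_compl_singleton] at change
  rw [change]
  congr 1 with x
  rw [abs_det_smul_reflection, abs_of_nonneg (by positivity), dist_zero_right, one_div,
    inv_pow ‖x‖]

end Inversion

section CauchyMeasure

variable {d : ℕ} {b : ℝ}

local notation "𝔼" => EuclideanSpace ℝ (Fin d)

/-- The total mass `∫ (1 + |z|²)^{-b} dz` by which the density of `ν_b` is normalized. -/
noncomputable def cauchyMass (d : ℕ) (b : ℝ) : ℝ :=
  ∫ z : EuclideanSpace ℝ (Fin d), (1 + ‖z‖ ^ 2) ^ (-b)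

lemma integrable_one_add_norm_sq_rpow (hb : d < 2 * b) :
    Integrable (fun y : 𝔼 => (1 + ‖y‖ ^ 2) ^ (-b)) := by
  simpa [neg_div] using
    integrable_rpow_neg_one_add_norm_sq (E := 𝔼) (r := 2 * b) (μ := volume) (by simpa using hb)

lemma cauchyMass_nonneg : 0 ≤ cauchyMass d b :=
  integral_nonneg fun y => by positivity

lemma cauchyMass_pos (hb : d < 2 * b) : 0 < cauchyMass d b :=
  integral_pos_of_forall_pos (fun y => by positivity) (integrable_one_add_norm_sq_rpow hb)

lemma continuous_one_add_norm_sq_rpow (b : ℝ) :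
    Continuous fun y : 𝔼 => (1 + ‖y‖ ^ 2) ^ b :=
  (by fun_prop : Continuous fun y : 𝔼 => 1 + ‖y‖ ^ 2).rpow_const fun y =>
    Or.inl (by positivity)

lemma measurable_cauchyMeasure_density (d : ℕ) (b : ℝ) :
    Measurable fun y : EuclideanSpace ℝ (Fin d) => ENNReal.ofReal ((1 + ‖y‖ ^ 2) ^ (-b) /
      ∫ z : EuclideanSpace ℝ (Fin d), (1 + ‖z‖ ^ 2) ^ (-b)) :=
  ((continuous_one_add_norm_sq_rpow (-b)).div_const _).measurable.ennreal_ofReal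

lemma toReal_cauchyMeasure_density (y : 𝔼) :
    (ENNReal.ofReal ((1 + ‖y‖ ^ 2) ^ (-b) / ∫ z : 𝔼, (1 + ‖z‖ ^ 2) ^ (-b))).toReal =
      (cauchyMass d b)⁻¹ * (1 + ‖y‖ ^ 2) ^ (-b) := by
  have := cauchyMass_nonneg (d := d) (b := b)
  rw [← cauchyMass, ENNReal.toReal_ofReal (by positivity), div_eq_inv_mul]

lemma integral_cauchyMeasure (h : 𝔼 → ℝ) :
    ∫ y, h y ∂cauchyMeasure d b = (cauchyMass d b)⁻¹ * ∫ y, h y * (1 + ‖y‖ ^ 2) ^ (-b) := by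
  rw [cauchyMeasure, integral_withDensity_eq_integral_toReal_smul
    (measurable_cauchyMeasure_density d b) (by simp), ← integral_const_mul]
  simp only [toReal_cauchyMeasure_density, smul_eq_mul]
  congr 1 with y
  ring

lemma integrable_cauchyMeasure_iff (hb : d < 2 * b) {h : 𝔼 → ℝ} :
    Integrable h (cauchyMeasure d b) ↔ Integrable fun y => h y * (1 + ‖y‖ ^ 2) ^ (-b) := by
  rw [cauchyMeasure, integrable_withDensity_iff (measurable_cauchyMeasure_density d b) (by simp),
    ← integrable_const_mul_iff (IsUnit.mk0 _ (inv_ne_zero (cauchyMass_pos hb).ne'))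
      fun y => h y * (1 + ‖y‖ ^ 2) ^ (-b)]
  simp only [toReal_cauchyMeasure_density, mul_left_comm]

lemma isProbabilityMeasure_cauchyMeasure (hb : d < 2 * b) :
    IsProbabilityMeasure (cauchyMeasure d b) := by
  have total : ∫ _, (1 : ℝ) ∂cauchyMeasure d b = 1 := by
    simp only [integral_cauchyMeasure, one_mul]
    exact inv_mul_cancel₀ (cauchyMass_pos hb).ne'
  rw [integral_const, smul_eq_mul, mul_one, measureReal_def, ENNReal.toReal_eq_one_iff] at total
  exact ⟨total⟩

lemma one_add_norm_sq_mul_rpow (y : 𝔼) (b : ℝ) :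
    (1 + ‖y‖ ^ 2) * (1 + ‖y‖ ^ 2) ^ (-b) = (1 + ‖y‖ ^ 2) ^ (-(b - 1)) := by
  rw [neg_sub, sub_eq_add_neg, Real.rpow_add (by positivity), Real.rpow_one]

lemma integral_mul_one_add_norm_sq_cauchyMeasure (hb : d < 2 * (b - 1)) (h : 𝔼 → ℝ) :
    ∫ y, h y * (1 + ‖y‖ ^ 2) ∂cauchyMeasure d b =
      cauchyMass d (b - 1) / cauchyMass d b * ∫ y, h y ∂cauchyMeasure d (b - 1) := by
  have := (cauchyMass_pos hb).ne'
  simp only [integral_cauchyMeasure, mul_assoc, one_add_norm_sq_mul_rpow]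
  field_simp

lemma integral_comp_add_smul_mul_rpow (β : ℝ) (H : 𝔼 → ℝ) (z : 𝔼) {w : ℝ} (hw : w ≠ 0) :
    ∫ y, H (z + w • y) * (1 + ‖y‖ ^ 2) ^ (-β) =
      |w| ^ (2 * β - d) * ∫ y, H y * (w ^ 2 + ‖y - z‖ ^ 2) ^ (-β) := by
  have hw' : 0 < |w| := abs_pos.2 hw
  have rescale (y : 𝔼) : H (z + w • y) * (1 + ‖y‖ ^ 2) ^ (-β) =
      (fun x => H (z + x) * (1 + ‖x‖ ^ 2 / w ^ 2) ^ (-β)) (w • y) := by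
    simp only [norm_smul, mul_pow, Real.norm_eq_abs, sq_abs]
    rw [mul_div_cancel_left₀ _ (by positivity)]
  simp only [rescale]
  rw [Measure.integral_comp_smul volume
      (fun x : 𝔼 => H (z + x) * (1 + ‖x‖ ^ 2 / w ^ 2) ^ (-β)) w,
    ← integral_sub_right_eq_self _ z, smul_eq_mul, ← integral_const_mul, ← integral_const_mul]
  congr 1 with y
  have hdiv : 1 + ‖y - z‖ ^ 2 / w ^ 2 = (w ^ 2 + ‖y - z‖ ^ 2) / |w| ^ (2 : ℝ) := by
    rw [Real.rpow_two, sq_abs]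
    field_simp
  rw [hdiv, Real.div_rpow (by positivity) (by positivity), ← Real.rpow_mul (abs_nonneg w),
    add_sub_cancel, Real.rpow_sub hw', Real.rpow_natCast, mul_neg, Real.rpow_neg hw'.le, abs_inv,
    abs_pow, finrank_euclideanSpace_fin]
  field_simp

lemma integral_comp_add_smul_cauchyMeasure (H : 𝔼 → ℝ) (z : 𝔼) {w : ℝ} (hw : w ≠ 0) :
    ∫ y, H (z + w • y) ∂cauchyMeasure d b = (cauchyMass d b)⁻¹ *
      (|w| ^ (2 * b - d) * ∫ y, H y * (w ^ 2 + ‖y - z‖ ^ 2) ^ (-b)) := by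
  rw [integral_cauchyMeasure, integral_comp_add_smul_mul_rpow b H z hw]

end CauchyMeasure

section KeyInequality

open EuclideanGeometry

variable {d : ℕ} {b : ℝ}

local notation "𝔼" => EuclideanSpace ℝ (Fin d)

lemma integral_norm_rpow_mul_rpow_eq (hd : 1 ≤ d) {s : ℝ} (hs : s ≠ 0) {a : 𝔼}
    (has : ‖a‖ ^ 2 + s ^ 2 = 1) :
    ∫ y : 𝔼, ‖y‖ ^ (2 * (b - d)) * (s ^ 2 + ‖y - a‖ ^ 2) ^ (-b) =
      ∫ y : 𝔼, (s ^ 2 + ‖y - a‖ ^ 2) ^ (-b) := by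
  have : Nontrivial 𝔼 := Module.nontrivial_of_finrank_pos (R := ℝ) (by
    rwa [finrank_euclideanSpace_fin])
  rw [← integral_comp_inversion fun y : 𝔼 => (s ^ 2 + ‖y - a‖ ^ 2) ^ (-b)]
  refine integral_congr_ae ?_
  filter_upwards [compl_mem_ae_iff.2 (measure_singleton (0 : 𝔼))] with y (hy : y ≠ 0)
  have hy' : 0 < ‖y‖ ^ 2 := by positivity
  have conformal : s ^ 2 + ‖inversion 0 1 y - a‖ ^ 2 = (s ^ 2 + ‖y - a‖ ^ 2) / ‖y‖ ^ 2 := by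
    rw [norm_inversion_sub_sq hy, norm_sub_sq_real]
    field_simp
    linear_combination (‖y‖ ^ 2 - 1) * has
  simp only [conformal, smul_eq_mul, finrank_euclideanSpace_fin]
  rw [Real.div_rpow (by positivity) hy'.le, Real.rpow_neg hy'.le, div_inv_eq_mul,
    Real.rpow_mul (norm_nonneg y), Real.rpow_two, Real.rpow_sub hy', Real.rpow_natCast, inv_pow]
  ring

lemma integral_norm_add_smul_rpow (hd : 1 ≤ d) (hb : d < 2 * b) {s : ℝ} {a : 𝔼}
    (has : ‖a‖ ^ 2 + s ^ 2 = 1) :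
    ∫ y, ‖a + s • y‖ ^ (2 * (b - d)) ∂cauchyMeasure d b = 1 := by
  have := isProbabilityMeasure_cauchyMeasure hb
  rcases eq_or_ne s 0 with rfl | hs
  · have : ‖a‖ = 1 := by nlinarith [norm_nonneg a]
    simp [this]
  · rw [integral_comp_add_smul_cauchyMeasure (fun y => ‖y‖ ^ (2 * (b - d))) a hs,
      integral_norm_rpow_mul_rpow_eq hd hs has]
    simpa using (integral_comp_add_smul_cauchyMeasure (b := b) (fun _ => 1) a hs).symm

lemma norm_add_smul_sq_le (a y : 𝔼) (s : ℝ) :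
    ‖a + s • y‖ ^ 2 ≤ (‖a‖ ^ 2 + s ^ 2) * (1 + ‖y‖ ^ 2) := by
  have triangle : ‖a + s • y‖ ^ 2 ≤ (‖a‖ + |s| * ‖y‖) ^ 2 := by
    gcongr
    simpa [norm_smul] using norm_add_le a (s • y)
  nlinarith [sq_nonneg (‖a‖ * ‖y‖ - |s|), sq_abs s]

lemma integrable_norm_add_smul_rpow {κ : ℝ} (hκ : 0 ≤ κ) (hb : d < 2 * (b - κ)) (a : 𝔼) (s : ℝ) :
    Integrable (fun y => ‖a + s • y‖ ^ (2 * κ)) (cauchyMeasure d b) := by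
  rw [integrable_cauchyMeasure_iff (by linarith)]
  refine ((integrable_one_add_norm_sq_rpow hb).const_mul ((‖a‖ ^ 2 + s ^ 2) ^ κ)).mono' ?_ ?_
  · exact (((by fun_prop : Continuous fun y : 𝔼 => ‖a + s • y‖).rpow_const
      fun y => Or.inr (by positivity)).mul
        (continuous_one_add_norm_sq_rpow (-b))).aestronglyMeasurable
  · refine .of_forall fun y => ?_
    rw [Real.norm_of_nonneg (by positivity), Real.rpow_mul (norm_nonneg _), Real.rpow_two,
      neg_sub, sub_eq_add_neg, Real.rpow_add (by positivity), ← mul_assoc,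
      ← Real.mul_rpow (by positivity) (by positivity)]
    gcongr
    exact norm_add_smul_sq_le a y s

-- AM–GM for `g`, `x ^ (2 * κ)` and `1` with weights `2 - p`, `1 / κ` and `p - 1 - 1 / κ`.
lemma rpow_mul_sq_le_add {p κ g x : ℝ} (hp2 : p ≤ 2) (hκ : 0 < κ) (hp : 1 / κ ≤ p - 1)
    (hg : 0 ≤ g) (hx : 0 ≤ x) :
    g ^ (2 - p) * x ^ 2 ≤ (2 - p) * g + 1 / κ * x ^ (2 * κ) + (p - 1 - 1 / κ) := by
  have amgm := Real.geom_mean_le_arith_mean3_weighted (w₁ := 2 - p) (w₂ := 1 / κ)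
    (w₃ := p - 1 - 1 / κ) (by linarith) (by positivity) (by linarith) hg
    (by positivity : 0 ≤ x ^ (2 * κ)) zero_le_one (by ring)
  rwa [Real.one_rpow, mul_one, mul_one, ← Real.rpow_mul hx,
    show 2 * κ * (1 / κ) = 2 by field_simp, Real.rpow_two] at amgm

variable {p : ℝ} {G : EuclideanSpace ℝ (Fin d) → ℝ}

lemma integrable_rpow_mul_norm_sq (hd : 1 ≤ d) (hb : d + 1 ≤ b) (hp1 : 1 / (b - d) ≤ p - 1)
    (hp2 : p ≤ 2) (hG : ∀ y, 0 ≤ G y) (hGi : Integrable G (cauchyMeasure d b)) (a : 𝔼) (s : ℝ) :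
    Integrable (fun y => G y ^ (2 - p) * ‖a + s • y‖ ^ 2) (cauchyMeasure d b) := by
  have hd' : (1 : ℝ) ≤ d := by exact_mod_cast hd
  have := isProbabilityMeasure_cauchyMeasure (d := d) (b := b) (by linarith)
  have moment := integrable_norm_add_smul_rpow (d := d) (b := b) (κ := b - d) (by linarith)
    (by linarith) a s
  refine (((hGi.const_mul (2 - p)).add (moment.const_mul (1 / (b - d)))).add
    (integrable_const (p - 1 - 1 / (b - d)))).mono' ?_ (.of_forall fun y => ?_)
  · exact (hGi.aestronglyMeasurable.aemeasurable.pow_const _).aestronglyMeasurable.mul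
      (by fun_prop : Continuous fun y : 𝔼 => ‖a + s • y‖ ^ 2).aestronglyMeasurable
  · have := hG y
    rw [Real.norm_of_nonneg (by positivity)]
    exact rpow_mul_sq_le_add hp2 (by linarith) hp1 (hG y) (norm_nonneg _)

lemma integral_rpow_mul_norm_sq_le_one (hd : 1 ≤ d) (hb : d + 1 ≤ b)
    (hp1 : 1 / (b - d) ≤ p - 1) (hp2 : p ≤ 2) (hG : ∀ y, 0 ≤ G y)
    (hGi : Integrable G (cauchyMeasure d b)) (hG1 : ∫ y, G y ∂cauchyMeasure d b = 1)
    {a : 𝔼} {s : ℝ} (has : ‖a‖ ^ 2 + s ^ 2 = 1) :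
    ∫ y, G y ^ (2 - p) * ‖a + s • y‖ ^ 2 ∂cauchyMeasure d b ≤ 1 := by
  have hd' : (1 : ℝ) ≤ d := by exact_mod_cast hd
  have := isProbabilityMeasure_cauchyMeasure (d := d) (b := b) (by linarith)
  have moment := integrable_norm_add_smul_rpow (d := d) (b := b) (κ := b - d) (by linarith)
    (by linarith) a s
  have hsum : Integrable (fun y => (2 - p) * G y + 1 / (b - d) * ‖a + s • y‖ ^ (2 * (b - d)))
      (cauchyMeasure d b) := (hGi.const_mul _).add (moment.const_mul _)
  calc ∫ y, G y ^ (2 - p) * ‖a + s • y‖ ^ 2 ∂cauchyMeasure d b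
      ≤ ∫ y, (2 - p) * G y + 1 / (b - d) * ‖a + s • y‖ ^ (2 * (b - d)) + (p - 1 - 1 / (b - d))
          ∂cauchyMeasure d b :=
        integral_mono (integrable_rpow_mul_norm_sq hd hb hp1 hp2 hG hGi a s)
          (hsum.add (integrable_const _)) fun y =>
            rpow_mul_sq_le_add hp2 (by linarith) hp1 (hG y) (norm_nonneg _)
    _ = 1 := by
        rw [integral_add hsum (integrable_const _), integral_add (hGi.const_mul _)
          (moment.const_mul _), integral_const_mul, integral_const_mul, hG1,
          integral_norm_add_smul_rpow hd (by linarith) has]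
        simp
        ring

lemma integral_rpow_mul_norm_sq_le (hd : 1 ≤ d) (hb : d + 1 ≤ b)
    (hp1 : 1 / (b - d) ≤ p - 1) (hp2 : p ≤ 2) (hG : ∀ y, 0 ≤ G y)
    (hGi : Integrable G (cauchyMeasure d b)) (hG0 : 0 < ∫ y, G y ∂cauchyMeasure d b)
    {a : 𝔼} {s : ℝ} (has : 0 < ‖a‖ ^ 2 + s ^ 2) :
    ∫ y, G y ^ (2 - p) * ‖a + s • y‖ ^ 2 ∂cauchyMeasure d b ≤
      (‖a‖ ^ 2 + s ^ 2) * (∫ y, G y ∂cauchyMeasure d b) ^ (2 - p) := by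
  set M := ∫ y, G y ∂cauchyMeasure d b
  set N := √(‖a‖ ^ 2 + s ^ 2)
  have hN : N ^ 2 = ‖a‖ ^ 2 + s ^ 2 := Real.sq_sqrt has.le
  have hN0 : 0 < N := Real.sqrt_pos.2 has
  have normalized : ‖N⁻¹ • a‖ ^ 2 + (N⁻¹ * s) ^ 2 = 1 := by
    rw [norm_smul, mul_pow, Real.norm_eq_abs, sq_abs]
    field_simp
    exact hN.symm
  have key := integral_rpow_mul_norm_sq_le_one hd hb hp1 hp2 (G := fun y => G y / M)
    (fun y => div_nonneg (hG y) hG0.le) (hGi.div_const M)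
    (by rw [integral_div, div_self hG0.ne']) normalized
  have scale (y : 𝔼) : (G y / M) ^ (2 - p) * ‖N⁻¹ • a + (N⁻¹ * s) • y‖ ^ 2 =
      (N ^ 2 * M ^ (2 - p))⁻¹ * (G y ^ (2 - p) * ‖a + s • y‖ ^ 2) := by
    rw [Real.div_rpow (hG y) hG0.le, mul_smul, ← smul_add, norm_smul, mul_pow, Real.norm_eq_abs,
      sq_abs]
    field_simp
  simp only [scale, integral_const_mul] at key
  rw [← hN]
  rwa [inv_mul_le_one₀ (by positivity)] at key

lemma norm_sq_integral_add_sq_integral_inner_le (hd : 1 ≤ d) (hb : d + 1 ≤ b)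
    (hp1 : 1 / (b - d) ≤ p - 1) (hp2 : p ≤ 2) (hG : ∀ y, 0 < G y)
    (hGi : Integrable G (cauchyMeasure d b)) {v : 𝔼 → 𝔼} (hv : Integrable v (cauchyMeasure d b))
    (hyv : Integrable (fun y => ⟪y, v y⟫) (cauchyMeasure d b))
    (hGv : Integrable (fun y => G y ^ (p - 2) * ‖v y‖ ^ 2) (cauchyMeasure d b)) :
    ‖∫ y, v y ∂cauchyMeasure d b‖ ^ 2 + (∫ y, ⟪y, v y⟫ ∂cauchyMeasure d b) ^ 2 ≤
      (∫ y, G y ∂cauchyMeasure d b) ^ (2 - p) *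
        ∫ y, G y ^ (p - 2) * ‖v y‖ ^ 2 ∂cauchyMeasure d b := by
  have hd' : (1 : ℝ) ≤ d := by exact_mod_cast hd
  have := isProbabilityMeasure_cauchyMeasure (d := d) (b := b) (by linarith)
  have hG0 := integral_pos_of_forall_pos hG hGi
  set A := ∫ y, v y ∂cauchyMeasure d b
  set B := ∫ y, ⟪y, v y⟫ ∂cauchyMeasure d b
  set T := ∫ y, G y ^ (p - 2) * ‖v y‖ ^ 2 ∂cauchyMeasure d b with hT
  have hT0 : 0 ≤ T := integral_nonneg fun y => by have := hG y; positivity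
  rcases (by positivity : 0 ≤ ‖A‖ ^ 2 + B ^ 2).eq_or_lt with hN | hN
  · rw [← hN]
    positivity
  have inner_eq (y : 𝔼) : ⟪A + B • y, v y⟫ = ⟪A, v y⟫ + B * ⟪y, v y⟫ := by
    rw [inner_add_left, real_inner_smul_left]
  have weight_inv (y : 𝔼) : (G y ^ (2 - p))⁻¹ = G y ^ (p - 2) := by
    rw [← Real.rpow_neg (hG y).le, neg_sub]
  have integral_inner_eq : ∫ y, ⟪A + B • y, v y⟫ ∂cauchyMeasure d b = ‖A‖ ^ 2 + B ^ 2 := by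
    simp only [inner_eq]
    rw [integral_add (hv.const_inner A) (hyv.const_mul B), integral_inner hv, integral_const_mul,
      real_inner_self_eq_norm_sq, sq B]
  have cauchy_schwarz := sq_integral_inner_le (r := fun y => G y ^ (2 - p))
    (u := fun y => A + B • y) (v := v) (fun y => Real.rpow_pos_of_pos (hG y) _)
    (integrable_rpow_mul_norm_sq hd hb hp1 hp2 (fun y => (hG y).le) hGi A B)
    (by simp only [inner_eq]; exact (hv.const_inner A).add (hyv.const_mul B))
    (by simpa only [weight_inv] using hGv)
  simp only [weight_inv, integral_inner_eq, ← hT] at cauchy_schwarz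
  have holder := integral_rpow_mul_norm_sq_le hd hb hp1 hp2 (fun y => (hG y).le) hGi hG0 hN
  have := cauchy_schwarz.trans (mul_le_mul_of_nonneg_right holder hT0)
  rw [sq, mul_assoc] at this
  exact le_of_mul_le_mul_left this hN

end KeyInequality

section SecondDerivative

/-- `f` is differentiable near `t`, with first and second derivatives `p` and `q` at `t`. -/
def HasSecondDerivAt (f : ℝ → ℝ) (p q t : ℝ) : Prop :=
  ∃ f' : ℝ → ℝ, (∀ᶠ s in 𝓝 t, HasDerivAt f (f' s) s) ∧ f' t = p ∧ HasDerivAt f' q t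

lemma hasSecondDerivAt_const (c t : ℝ) : HasSecondDerivAt (fun _ => c) 0 0 t :=
  ⟨fun _ => 0, .of_forall fun s => hasDerivAt_const s c, rfl, hasDerivAt_const t 0⟩

lemma hasSecondDerivAt_add_mul_const (c m t : ℝ) :
    HasSecondDerivAt (fun s => c + s * m) m 0 t :=
  ⟨fun _ => m, .of_forall fun s => by
    simpa using ((hasDerivAt_id s).mul_const m).const_add c, rfl, hasDerivAt_const t m⟩

namespace HasSecondDerivAt

variable {f g : ℝ → ℝ} {p q p₁ q₁ t : ℝ}

lemma hasDerivAt (hf : HasSecondDerivAt f p q t) : HasDerivAt f p t := by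
  obtain ⟨f', hf', rfl, -⟩ := hf
  exact hf'.self_of_nhds

lemma hasDerivAt_deriv (hf : HasSecondDerivAt f p q t) : HasDerivAt (deriv f) q t := by
  obtain ⟨f', hf', -, hq⟩ := hf
  exact hq.congr_of_eventuallyEq (hf'.mono fun s hs => hs.deriv)

lemma congr_of_eventuallyEq (hf : HasSecondDerivAt f p q t) (h : g =ᶠ[𝓝 t] f) :
    HasSecondDerivAt g p q t := by
  obtain ⟨f', hf', hp, hq⟩ := hf
  refine ⟨f', ?_, hp, hq⟩
  filter_upwards [hf', h.eventuallyEq_nhds] with s hs hgs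
  exact hs.congr_of_eventuallyEq hgs

lemma add (hf : HasSecondDerivAt f p q t) (hg : HasSecondDerivAt g p₁ q₁ t) :
    HasSecondDerivAt (fun s => f s + g s) (p + p₁) (q + q₁) t := by
  obtain ⟨f', hf', rfl, hq⟩ := hf
  obtain ⟨g', hg', rfl, hq₁⟩ := hg
  exact ⟨fun s => f' s + g' s, (hf'.and hg').mono fun s hs => hs.1.add hs.2, rfl, hq.add hq₁⟩

lemma mul (hf : HasSecondDerivAt f p q t) (hg : HasSecondDerivAt g p₁ q₁ t) :
    HasSecondDerivAt (fun s => f s * g s) (p * g t + f t * p₁)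
      (q * g t + 2 * (p * p₁) + f t * q₁) t := by
  have hf₀ := hf.hasDerivAt
  have hg₀ := hg.hasDerivAt
  obtain ⟨f', hf', rfl, hq⟩ := hf
  obtain ⟨g', hg', rfl, hq₁⟩ := hg
  refine ⟨fun s => f' s * g s + f s * g' s, (hf'.and hg').mono fun s hs => hs.1.mul hs.2, rfl,
    ((hq.mul hg₀).add (hf₀.mul hq₁)).congr_deriv ?_⟩
  ring

lemma const_mul (c : ℝ) (hf : HasSecondDerivAt f p q t) :
    HasSecondDerivAt (fun s => c * f s) (c * p) (c * q) t := by
  simpa using (hasSecondDerivAt_const c t).mul hf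

lemma rpow_const (hf : HasSecondDerivAt f p q t) (h0 : 0 < f t) (r : ℝ) :
    HasSecondDerivAt (fun s => f s ^ r) (r * f t ^ (r - 1) * p)
      (r * f t ^ (r - 1) * q + r * (r - 1) * f t ^ (r - 2) * p ^ 2) t := by
  have hf₀ := hf.hasDerivAt
  have hpos : ∀ᶠ s in 𝓝 t, 0 < f s := hf₀.continuousAt.eventually (lt_mem_nhds h0)
  obtain ⟨f', hf', rfl, hq⟩ := hf
  refine ⟨fun s => f' s * r * f s ^ (r - 1), ?_, by ring, ?_⟩
  · filter_upwards [hf', hpos] with s hs hs0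
    exact hs.rpow_const (Or.inl hs0.ne')
  · refine ((hq.mul_const r).mul (hf₀.rpow_const (Or.inl h0.ne'))).congr_deriv ?_
    rw [show r - 1 - 1 = r - 2 by ring]
    ring

lemma eq_zero_of_isLocalMin (hf : HasSecondDerivAt f p q t) (hmin : IsLocalMin f t) : p = 0 :=
  hmin.hasDerivAt_eq_zero hf.hasDerivAt

lemma nonneg_of_isLocalMin (hf : HasSecondDerivAt f p q t) (hmin : IsLocalMin f t) : 0 ≤ q := by
  by_contra! hq
  have hmax : IsLocalMax f t := isLocalMax_of_deriv_deriv_neg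
    (by rwa [hf.hasDerivAt_deriv.deriv]) (hmin.deriv_eq_zero) hf.hasDerivAt.continuousAt
  have hconst : f =ᶠ[𝓝 t] fun _ => f t := by
    filter_upwards [hmin, hmax] with s hs₁ hs₂ using le_antisymm hs₂ hs₁
  have hq0 := hf.hasDerivAt_deriv.unique
    ((hasSecondDerivAt_const (f t) t).congr_of_eventuallyEq hconst).hasDerivAt_deriv
  exact hq.ne hq0

end HasSecondDerivAt

end SecondDerivative

section ParametricIntegral

variable {Y : Type*} [NormedAddCommGroup Y] [NormedSpace ℝ Y] {K : ℝ → Y → ℝ} {O : Set ℝ}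

lemma contDiffOn_uncurry_deriv {m n : WithTop ℕ∞} (hO : IsOpen O)
    (hK : ContDiffOn ℝ n (fun x : ℝ × Y => K x.1 x.2) (O ×ˢ univ)) (hmn : m + 1 ≤ n) :
    ContDiffOn ℝ m (fun x : ℝ × Y => deriv (K · x.2) x.1) (O ×ˢ univ) := by
  have hopen : IsOpen (O ×ˢ (univ : Set Y)) := hO.prod isOpen_univ
  refine ((hK.fderiv_of_isOpen hopen hmn).clm_apply
    (contDiffOn_const (c := ((1 : ℝ), (0 : Y))))).congr fun x hx => ?_
  have hdiff := ((hK.contDiffAt (hopen.mem_nhds hx)).differentiableAt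
    (by rintro rfl; simp at hmn)).hasFDerivAt
  have hline : HasDerivAt (fun s => (s, x.2)) ((1 : ℝ), (0 : Y)) x.1 :=
    (hasDerivAt_id x.1).prodMk (hasDerivAt_const x.1 x.2)
  exact (hdiff.comp_hasDerivAt x.1 hline).deriv

lemma continuous_of_hasSecondDerivAt (hO : IsOpen O)
    (hK : ContDiffOn ℝ 2 (fun x : ℝ × Y => K x.1 x.2) (O ×ˢ univ)) {t : ℝ} (ht : t ∈ O)
    {p q : Y → ℝ} (hpq : ∀ y, HasSecondDerivAt (K · y) (p y) (q y) t) :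
    Continuous p ∧ Continuous q := by
  have hK₁ := contDiffOn_uncurry_deriv (m := 1) hO hK (by norm_num)
  have hK₂ := contDiffOn_uncurry_deriv (K := fun s y => deriv (K · y) s) (m := 0) hO hK₁ (by simp)
  have slice {F : ℝ × Y → ℝ} (hF : ContinuousOn F (O ×ˢ univ)) : Continuous fun y => F (t, y) :=
    hF.comp_continuous (by fun_prop) fun y => ⟨ht, mem_univ y⟩
  have hp := slice hK₁.continuousOn
  have hq := slice hK₂.continuousOn
  simp only [fun y => (hpq y).hasDerivAt.deriv] at hp
  simp only [fun y => (hpq y).hasDerivAt_deriv.deriv] at hq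
  exact ⟨hp, hq⟩

variable [MeasurableSpace Y] [OpensMeasurableSpace Y] {μ : Measure Y}
  [IsFiniteMeasureOnCompacts μ] {φ : Y → ℝ}

lemma hasDerivAt_integral_mul (hφ : Continuous φ) (hc : HasCompactSupport φ) (hO : IsOpen O)
    (hK : ContDiffOn ℝ 1 (fun x : ℝ × Y => K x.1 x.2) (O ×ˢ univ)) {t : ℝ} (ht : t ∈ O) :
    HasDerivAt (fun s => ∫ y, φ y * K s y ∂μ) (∫ y, φ y * deriv (K · y) t ∂μ) t := by
  have hK' := (contDiffOn_uncurry_deriv hO hK (m := 0) (by simp)).continuousOn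
  have slice {F : ℝ × Y → ℝ} (hF : ContinuousOn F (O ×ˢ univ)) {s : ℝ} (hs : s ∈ O) :
      Continuous fun y => F (s, y) :=
    hF.comp_continuous (by fun_prop) fun y => ⟨hs, mem_univ y⟩
  obtain ⟨δ, hδ, hδO⟩ := Metric.nhds_basis_closedBall.mem_iff.1 (hO.mem_nhds ht)
  obtain ⟨C, hC⟩ := ((isCompact_closedBall t δ).prod hc).exists_bound_of_continuousOn
    (hK'.mono (prod_mono hδO (subset_univ _)))
  refine (hasDerivAt_integral_of_dominated_loc_of_deriv_le (bound := fun y => C * ‖φ y‖)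
    (F := fun s y => φ y * K s y) (F' := fun s y => φ y * deriv (K · y) s)
    (Metric.closedBall_mem_nhds t hδ) ?_ ?_ ?_ ?_ ?_ ?_).2
  · filter_upwards [hO.mem_nhds ht] with s hs
    exact (hφ.mul (slice hK.continuousOn hs)).aestronglyMeasurable
  · exact (hφ.mul (slice hK.continuousOn ht)).integrable_of_hasCompactSupport hc.mul_right
  · exact (hφ.mul (slice hK' ht)).aestronglyMeasurable
  · refine .of_forall fun y s hs => ?_
    rw [norm_mul, mul_comm]
    by_cases hy : y ∈ tsupport φ
    · gcongr
      exact hC (s, y) ⟨hs, hy⟩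
    · simp [image_eq_zero_of_notMem_tsupport hy]
  · exact (hφ.norm.integrable_of_hasCompactSupport hc.norm).const_mul C
  · refine .of_forall fun y s hs => ?_
    have hline : ContDiffOn ℝ 1 (K · y) O :=
      hK.comp (contDiffOn_id.prodMk contDiffOn_const) fun s hs => ⟨hs, mem_univ y⟩
    exact ((hline.contDiffAt (hO.mem_nhds (hδO hs))).differentiableAt one_ne_zero).hasDerivAt
      |>.const_mul (φ y)

lemma hasSecondDerivAt_integral_mul (hφ : Continuous φ) (hc : HasCompactSupport φ)
    (hO : IsOpen O) (hK : ContDiffOn ℝ 2 (fun x : ℝ × Y => K x.1 x.2) (O ×ˢ univ)) {t : ℝ}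
    (ht : t ∈ O) {p q : Y → ℝ} (hpq : ∀ y, HasSecondDerivAt (K · y) (p y) (q y) t) :
    HasSecondDerivAt (fun s => ∫ y, φ y * K s y ∂μ) (∫ y, φ y * p y ∂μ) (∫ y, φ y * q y ∂μ) t := by
  refine ⟨fun s => ∫ y, φ y * deriv (K · y) s ∂μ, ?_, ?_, ?_⟩
  · filter_upwards [hO.mem_nhds ht] with s hs
    exact hasDerivAt_integral_mul hφ hc hO (hK.of_le one_le_two) hs
  · simp only [fun y => (hpq y).hasDerivAt.deriv]
  · simpa only [fun y => (hpq y).hasDerivAt_deriv.deriv] using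
      hasDerivAt_integral_mul (K := fun s y => deriv (K · y) s) hφ hc hO
        (contDiffOn_uncurry_deriv hO hK (by norm_num)) ht

end ParametricIntegral

section HalfSpace

variable {d : ℕ}

local notation "𝔼" => EuclideanSpace ℝ (Fin d)

/-- The standard frame of `ℝ^d × ℝ`; the vertical direction is indexed by `none`. -/
noncomputable def halfSpaceFrame (d : ℕ) : Option (Fin d) → EuclideanSpace ℝ (Fin d) × ℝ
  | none => (0, 1)
  | some i => (EuclideanSpace.single i 1, 0)

/-- The squared length of the gradient of `F` on `ℝ^d × ℝ`. -/
noncomputable def halfSpaceGradSq (F : EuclideanSpace ℝ (Fin d) × ℝ → ℝ)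
    (x : EuclideanSpace ℝ (Fin d) × ℝ) : ℝ :=
  ∑ j, lineDeriv ℝ F x (halfSpaceFrame d j) ^ 2

/-- The operator `Δ_z + ∂_w² + (a / w) ∂_w` of the half-space `{(z, w) : 0 < w}`, applied to `F`
at `x`, has the value `L`. -/
def HasHalfSpaceLaplacianAt (a : ℝ) (F : EuclideanSpace ℝ (Fin d) × ℝ → ℝ) (L : ℝ)
    (x : EuclideanSpace ℝ (Fin d) × ℝ) : Prop :=
  ∃ p q : Option (Fin d) → ℝ,
    (∀ j, HasSecondDerivAt (fun t => F (x + t • halfSpaceFrame d j)) (p j) (q j) 0) ∧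
    ∑ j, q j + a / x.2 * p none = L

variable {a : ℝ} {F : EuclideanSpace ℝ (Fin d) × ℝ → ℝ} {x : EuclideanSpace ℝ (Fin d) × ℝ}

lemma tendsto_add_smul_nhds_zero (x v : 𝔼 × ℝ) :
    Tendsto (fun t : ℝ => x + t • v) (𝓝 0) (𝓝 x) :=
  (by fun_prop : Continuous fun t : ℝ => x + t • v).tendsto' 0 x (by simp)

lemma hasHalfSpaceLaplacianAt_const (a c : ℝ) (x : 𝔼 × ℝ) :
    HasHalfSpaceLaplacianAt a (fun _ => c) 0 x :=
  ⟨0, 0, fun _ => hasSecondDerivAt_const c 0, by simp⟩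

lemma hasHalfSpaceLaplacianAt_snd (a : ℝ) (x : 𝔼 × ℝ) :
    HasHalfSpaceLaplacianAt a (fun x => x.2) (a / x.2) x :=
  ⟨fun j => (halfSpaceFrame d j).2, 0,
    fun j => hasSecondDerivAt_add_mul_const x.2 (halfSpaceFrame d j).2 0, by simp [halfSpaceFrame]⟩

namespace HasHalfSpaceLaplacianAt

variable {G : EuclideanSpace ℝ (Fin d) × ℝ → ℝ} {L M : ℝ}

lemma congr_of_eventuallyEq (hF : HasHalfSpaceLaplacianAt a F L x) (h : G =ᶠ[𝓝 x] F) :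
    HasHalfSpaceLaplacianAt a G L x := by
  obtain ⟨p, q, hpq, hL⟩ := hF
  exact ⟨p, q, fun j => (hpq j).congr_of_eventuallyEq
    ((tendsto_add_smul_nhds_zero x _).eventually h), hL⟩

lemma add (hF : HasHalfSpaceLaplacianAt a F L x) (hG : HasHalfSpaceLaplacianAt a G M x) :
    HasHalfSpaceLaplacianAt a (fun x => F x + G x) (L + M) x := by
  obtain ⟨p, q, hpq, rfl⟩ := hF
  obtain ⟨p', q', hpq', rfl⟩ := hG
  refine ⟨p + p', q + q', fun j => (hpq j).add (hpq' j), ?_⟩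
  simp only [Pi.add_apply, Finset.sum_add_distrib]
  ring

lemma const_mul (c : ℝ) (hF : HasHalfSpaceLaplacianAt a F L x) :
    HasHalfSpaceLaplacianAt a (fun x => c * F x) (c * L) x := by
  obtain ⟨p, q, hpq, rfl⟩ := hF
  refine ⟨fun j => c * p j, fun j => c * q j, fun j => (hpq j).const_mul c, ?_⟩
  rw [← Finset.mul_sum]
  ring

lemma rpow_const (hF : HasHalfSpaceLaplacianAt a F L x) (h0 : 0 < F x) (r : ℝ) :
    HasHalfSpaceLaplacianAt a (fun x => F x ^ r)
      (r * F x ^ (r - 1) * L + r * (r - 1) * F x ^ (r - 2) * halfSpaceGradSq F x) x := by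
  obtain ⟨p, q, hpq, rfl⟩ := hF
  have hline (j : Option (Fin d)) : lineDeriv ℝ F x (halfSpaceFrame d j) = p j :=
    (hpq j).hasDerivAt.deriv
  refine ⟨_, _, fun j => (hpq j).rpow_const (by simpa using h0) r, ?_⟩
  simp only [zero_smul, add_zero, halfSpaceGradSq, hline, Finset.sum_add_distrib, Finset.mul_sum,
    mul_add]
  ring

lemma nonneg_of_isLocalMin (hF : HasHalfSpaceLaplacianAt a F L x) (hmin : IsLocalMin F x) :
    0 ≤ L := by
  obtain ⟨p, q, hpq, rfl⟩ := hF
  have hline (j : Option (Fin d)) : IsLocalMin (fun t : ℝ => F (x + t • halfSpaceFrame d j)) 0 := by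
    simpa [IsLocalMin, IsMinFilter] using (tendsto_add_smul_nhds_zero x _).eventually hmin
  rw [(hpq none).eq_zero_of_isLocalMin (hline none), mul_zero, add_zero]
  exact Finset.sum_nonneg fun j _ => (hpq j).nonneg_of_isLocalMin (hline j)

end HasHalfSpaceLaplacianAt

lemma hasHalfSpaceLaplacianAt_integral_mul {Y : Type*} [NormedAddCommGroup Y] [NormedSpace ℝ Y]
    [MeasurableSpace Y] [OpensMeasurableSpace Y] {μ : Measure Y} [IsFiniteMeasureOnCompacts μ]
    {φ : Y → ℝ} (hφ : Continuous φ) (hc : HasCompactSupport φ)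
    {O : Set (𝔼 × ℝ)} (hO : IsOpen O) (hx : x ∈ O) {K : 𝔼 × ℝ → Y → ℝ}
    (hK : ContDiffOn ℝ 2 (fun z : (𝔼 × ℝ) × Y => K z.1 z.2) (O ×ˢ univ)) {L : Y → ℝ}
    (hL : ∀ y, HasHalfSpaceLaplacianAt a (K · y) (L y) x) :
    HasHalfSpaceLaplacianAt a (fun x => ∫ y, φ y * K x y ∂μ) (∫ y, φ y * L y ∂μ) x := by
  choose p q hpq hsum using hL
  have hline (j : Option (Fin d)) :
      Continuous fun t : ℝ => x + t • halfSpaceFrame d j := by fun_prop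
  have hopen (j : Option (Fin d)) := hO.preimage (hline j)
  have hmem (j : Option (Fin d)) : (0 : ℝ) ∈ (fun t => x + t • halfSpaceFrame d j) ⁻¹' O := by
    simpa using hx
  have hKline (j : Option (Fin d)) :
      ContDiffOn ℝ 2 (fun z : ℝ × Y => K (x + z.1 • halfSpaceFrame d j) z.2)
        (((fun t => x + t • halfSpaceFrame d j) ⁻¹' O) ×ˢ univ) :=
    hK.comp (g := fun z : (𝔼 × ℝ) × Y => K z.1 z.2)
      (f := fun z : ℝ × Y => (x + z.1 • halfSpaceFrame d j, z.2))
      (by fun_prop : ContDiff ℝ 2 _).contDiffOn fun z hz => ⟨hz.1, mem_univ _⟩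
  have hint {k : Y → ℝ} (hk : Continuous k) : Integrable (fun y => φ y * k y) μ :=
    (hφ.mul hk).integrable_of_hasCompactSupport hc.mul_right
  have hcont (j : Option (Fin d)) :=
    continuous_of_hasSecondDerivAt (hopen j) (hKline j) (hmem j) fun y => hpq y j
  refine ⟨fun j => ∫ y, φ y * p y j ∂μ, fun j => ∫ y, φ y * q y j ∂μ, fun j =>
    hasSecondDerivAt_integral_mul hφ hc (hopen j) (hKline j) (hmem j) fun y => hpq y j, ?_⟩
  rw [← integral_finsetSum _ fun j _ => hint (hcont j).2, ← integral_const_mul,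
    ← integral_add (integrable_finsetSum _ fun j _ => hint (hcont j).2)
      ((hint (hcont none).1).const_mul _)]
  congr 1 with y
  rw [← hsum, ← Finset.mul_sum]
  ring

theorem nonneg_of_hasHalfSpaceLaplacianAt_nonpos (ha : a < 0)
    (hF : ContinuousOn F {x | 0 ≤ x.2}) (hboundary : ∀ z, 0 ≤ F (z, 0))
    (hinfty : ∀ δ > 0, ∀ᶠ x in cocompact (𝔼 × ℝ) ⊓ 𝓟 {x | 0 < x.2}, -δ < F x)
    (hL : ∀ x, 0 < x.2 → ∃ L ≤ 0, HasHalfSpaceLaplacianAt a F L x) (hx : 0 ≤ x.2) :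
    0 ≤ F x := by
  by_contra! hneg
  have hε : 0 < -F x / (2 * (x.2 + 1)) := div_pos (by linarith) (by linarith)
  set ε := -F x / (2 * (x.2 + 1)) with hε_def
  have hεx : ε * x.2 < -F x / 2 := by
    have : ε * (x.2 + 1) = -F x / 2 := by
      rw [hε_def]
      field_simp
    linarith
  have eq_boundary {y : 𝔼 × ℝ} (hy : 0 = y.2) : (y.1, (0 : ℝ)) = y := Prod.ext rfl hy
  -- Since `a < 0`, adding `ε w` makes the function strictly superharmonic.
  obtain ⟨m, hm, hmin⟩ := (hF.add (by fun_prop : ContinuousOn (fun x : 𝔼 × ℝ => ε * x.2) _))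
    |>.exists_isMinOn' (isClosed_le continuous_const continuous_snd) hx <| by
      rw [eventually_inf_principal]
      filter_upwards [eventually_inf_principal.1 (hinfty (-F x / 2) (by linarith))]
        with y hy (hy0 : 0 ≤ y.2)
      change F x + ε * x.2 ≤ F y + ε * y.2
      have := mul_nonneg hε.le hy0
      rcases hy0.eq_or_lt with h0 | h0
      · have := eq_boundary h0 ▸ hboundary y.1
        linarith
      · linarith [hy h0]
  have hmx : F m + ε * m.2 ≤ F x + ε * x.2 := hmin hx
  rcases (show 0 ≤ m.2 from hm).eq_or_lt with hm0 | hm0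
  · have := eq_boundary hm0 ▸ hboundary m.1
    rw [← hm0] at hmx
    linarith
  · obtain ⟨L, hL0, hLm⟩ := hL m hm0
    have hlocal := hmin.isLocalMin <| mem_of_superset
      ((isOpen_lt continuous_const continuous_snd).mem_nhds hm0) fun y (hy : 0 < y.2) => hy.le
    have := (hLm.add ((hasHalfSpaceLaplacianAt_snd a m).const_mul ε)).nonneg_of_isLocalMin hlocal
    have := mul_neg_of_pos_of_neg hε (div_neg_of_neg_of_pos ha hm0)
    linarith

end HalfSpace

section Kernel

variable {d : ℕ}

local notation "𝔼" => EuclideanSpace ℝ (Fin d)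

/-- The Poisson-type kernel `w^α (w² + |y - z|²)^{-β}` at the point `x = (z, w)` of the half-space
and the boundary point `y`. -/
noncomputable def halfSpaceKernel (α β : ℝ) (x : EuclideanSpace ℝ (Fin d) × ℝ)
    (y : EuclideanSpace ℝ (Fin d)) : ℝ :=
  x.2 ^ α * (x.2 ^ 2 + ‖y - x.1‖ ^ 2) ^ (-β)

lemma contDiffOn_halfSpaceKernel (α β : ℝ) : ContDiffOn ℝ 2
    (fun z : (𝔼 × ℝ) × 𝔼 => halfSpaceKernel α β z.1 z.2) ({x | 0 < x.2} ×ˢ univ) := by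
  rintro z ⟨hz : 0 < z.1.2, -⟩
  have hdist : ContDiffAt ℝ 2 (fun z : (𝔼 × ℝ) × 𝔼 => z.1.2 ^ 2 + ‖z.2 - z.1.1‖ ^ 2) z :=
    (contDiff_fst.snd.pow 2).add ((contDiff_snd.sub contDiff_fst.fst).norm_sq ℝ) |>.contDiffAt
  exact ((contDiff_fst.snd.contDiffAt.rpow_const_of_ne hz.ne').mul
    (hdist.rpow_const_of_ne (by positivity))).contDiffWithinAt

lemma hasSecondDerivAt_sq_add_norm_sq (x v : 𝔼 × ℝ) (y : 𝔼) :
    HasSecondDerivAt (fun t => (x + t • v).2 ^ 2 + ‖y - (x + t • v).1‖ ^ 2)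
      (2 * (x.2 * v.2 - ⟪y - x.1, v.1⟫)) (2 * (v.2 ^ 2 + ‖v.1‖ ^ 2)) 0 := by
  have expand (t : ℝ) : (x + t • v).2 ^ 2 + ‖y - (x + t • v).1‖ ^ 2 =
      (x.2 ^ 2 + ‖y - x.1‖ ^ 2 + t * (2 * (x.2 * v.2 - ⟪y - x.1, v.1⟫))) +
        (v.2 ^ 2 + ‖v.1‖ ^ 2) * ((0 + t * 1) * (0 + t * 1)) := by
    rw [Prod.fst_add, Prod.snd_add, Prod.smul_fst, Prod.smul_snd, ← sub_sub, norm_sub_sq_real,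
      norm_smul, real_inner_smul_right, mul_pow, Real.norm_eq_abs, sq_abs, smul_eq_mul]
    ring
  simp only [expand]
  have hid := hasSecondDerivAt_add_mul_const 0 1 0
  convert (hasSecondDerivAt_add_mul_const _ _ 0).add ((hid.mul hid).const_mul _) using 1
  · ring
  · ring

lemma hasHalfSpaceLaplacianAt_halfSpaceKernel (α β : ℝ) {x : 𝔼 × ℝ} (hx : 0 < x.2) (y : 𝔼) :
    HasHalfSpaceLaplacianAt (1 - α) (halfSpaceKernel α β · y)
      (2 * β * (2 * β - α - d) * halfSpaceKernel α (β + 1) x y) x := by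
  have hS : 0 < x.2 ^ 2 + ‖y - x.1‖ ^ 2 := by positivity
  have height (j : Option (Fin d)) :=
    (hasSecondDerivAt_add_mul_const x.2 (halfSpaceFrame d j).2 0).rpow_const (by simpa using hx) α
  have dist (j : Option (Fin d)) :=
    (hasSecondDerivAt_sq_add_norm_sq x (halfSpaceFrame d j) y).rpow_const (by simpa using hS) (-β)
  refine ⟨_, _, fun j => (height j).mul (dist j), ?_⟩
  have hsum : ∑ i, (y - x.1) i ^ 2 = ‖y - x.1‖ ^ 2 := by simp [EuclideanSpace.norm_sq_eq]
  have pow_sub_two {c : ℝ} (hc : 0 < c) (r : ℝ) :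
      c ^ (r - 1) = c ^ (r - 2) * c ∧ c ^ r = c ^ (r - 2) * c ^ 2 :=
    ⟨by rw [← Real.rpow_add_one hc.ne']; ring_nf,
      by rw [← Real.rpow_two, ← Real.rpow_add hc, sub_add_cancel]⟩
  simp only [halfSpaceKernel, Fintype.sum_option, halfSpaceFrame, zero_smul, add_zero, neg_add,
    ← sub_eq_add_neg, (pow_sub_two hx α).1, (pow_sub_two hx α).2, (pow_sub_two hS (-β)).1,
    (pow_sub_two hS (-β)).2, inner_zero_right, norm_zero, EuclideanSpace.inner_single_right,
    PiLp.norm_single, norm_one, zero_mul, mul_zero, one_mul, mul_one, zero_add, sub_zero, zero_sub]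
  simp only [Finset.sum_add_distrib, ← Finset.mul_sum, Finset.sum_const, Finset.card_univ,
    Fintype.card_fin, nsmul_eq_mul, conj_trivial, mul_pow, neg_sq, hsum]
  field_simp
  ring

end Kernel

section CauchyAverage

variable {d : ℕ} {α β b : ℝ} {φ : EuclideanSpace ℝ (Fin d) → ℝ}
  {x : EuclideanSpace ℝ (Fin d) × ℝ}

local notation "𝔼" => EuclideanSpace ℝ (Fin d)

/-- The mean of `h` over the Cauchy distribution centered at `z` with scale `w`, as a function of
`x = (z, w)`. -/
noncomputable def cauchyAverage (b : ℝ) (h : EuclideanSpace ℝ (Fin d) → ℝ)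
    (x : EuclideanSpace ℝ (Fin d) × ℝ) : ℝ :=
  ∫ y, h (x.1 + x.2 • y) ∂cauchyMeasure d b

lemma cauchyAverage_boundary (hb : d < 2 * b) (h : 𝔼 → ℝ) (z : 𝔼) :
    cauchyAverage b h (z, 0) = h z := by
  have := isProbabilityMeasure_cauchyMeasure hb
  simp [cauchyAverage]

lemma cauchyAverage_eq_integral_halfSpaceKernel (b : ℝ) (h : 𝔼 → ℝ) (hx : 0 < x.2) :
    cauchyAverage b h x =
      (cauchyMass d b)⁻¹ * ∫ y, h y * halfSpaceKernel (2 * b - d) b x y := by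
  rw [cauchyAverage, integral_comp_add_smul_cauchyMeasure h x.1 hx.ne', abs_of_pos hx,
    ← integral_const_mul]
  simp only [halfSpaceKernel, mul_left_comm]

lemma sq_mul_halfSpaceKernel (hx : 0 < x.2) (y : 𝔼) :
    x.2 ^ 2 * halfSpaceKernel α β x y = halfSpaceKernel (α + 2) β x y := by
  rw [halfSpaceKernel, halfSpaceKernel, Real.rpow_add hx, Real.rpow_two]
  ring

lemma halfSpaceKernel_le (hβ : d ≤ 2 * β) (hx : 0 < x.2) (y : 𝔼) :
    halfSpaceKernel (2 * β - d) β x y ≤ √(x.2 ^ 2 + ‖y - x.1‖ ^ 2) ^ (-d : ℝ) := by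
  have hS : 0 < x.2 ^ 2 + ‖y - x.1‖ ^ 2 := by positivity
  have hle : x.2 ≤ √(x.2 ^ 2 + ‖y - x.1‖ ^ 2) :=
    Real.le_sqrt_of_sq_le (le_add_of_nonneg_right (sq_nonneg _))
  calc halfSpaceKernel (2 * β - d) β x y
      ≤ √(x.2 ^ 2 + ‖y - x.1‖ ^ 2) ^ (2 * β - d) * (x.2 ^ 2 + ‖y - x.1‖ ^ 2) ^ (-β) := by
        unfold halfSpaceKernel
        gcongr
    _ = √(x.2 ^ 2 + ‖y - x.1‖ ^ 2) ^ (-d : ℝ) := by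
        rw [Real.sqrt_eq_rpow, ← Real.rpow_mul hS.le, ← Real.rpow_mul hS.le, ← Real.rpow_add hS]
        ring_nf

lemma norm_sub_le_sqrt_sq_add_norm_sq (x : 𝔼 × ℝ) (y : 𝔼) :
    ‖x‖ - ‖y‖ ≤ √(x.2 ^ 2 + ‖y - x.1‖ ^ 2) := by
  rw [sub_le_iff_le_add, Prod.norm_def, max_le_iff, Real.norm_eq_abs]
  constructor
  · have : ‖y - x.1‖ ≤ √(x.2 ^ 2 + ‖y - x.1‖ ^ 2) :=
      Real.le_sqrt_of_sq_le (le_add_of_nonneg_left (sq_nonneg _))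
    linarith [norm_le_norm_add_norm_sub' x.1 y, norm_sub_rev x.1 y]
  · have : |x.2| ≤ √(x.2 ^ 2 + ‖y - x.1‖ ^ 2) :=
      Real.abs_le_sqrt (le_add_of_nonneg_right (sq_nonneg _))
    linarith [norm_nonneg y]

lemma tendsto_cauchyAverage_cocompact_zero (hd : 1 ≤ d) (hb : d ≤ 2 * b)
    (hφ : Continuous φ) (hc : HasCompactSupport φ) :
    Tendsto (cauchyAverage b φ) (cocompact _ ⊓ 𝓟 {x | 0 < x.2}) (𝓝 0) := by
  obtain ⟨R, hR⟩ := hc.isCompact.isBounded.exists_norm_le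
  have hφi : Integrable φ := hφ.integrable_of_hasCompactSupport hc
  have hlim : Tendsto (fun x : 𝔼 × ℝ => (cauchyMass d b)⁻¹ * ((∫ y, |φ y|) * (‖x‖ - R) ^ (-d : ℝ)))
      (cocompact _ ⊓ 𝓟 {x | 0 < x.2}) (𝓝 0) := by
    have := (tendsto_rpow_neg_atTop (y := d) (by positivity)).comp
      (tendsto_atTop_add_const_right _ (-R) (tendsto_norm_cocompact_atTop (E := 𝔼 × ℝ)))
    simpa [sub_eq_add_neg] using
      ((this.const_mul (∫ y, |φ y|)).const_mul (cauchyMass d b)⁻¹).mono_left inf_le_left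
  refine squeeze_zero_norm' (eventually_inf_principal.2 ?_) hlim
  filter_upwards [tendsto_norm_cocompact_atTop.eventually_gt_atTop R] with x hxR (hx : 0 < x.2)
  have := cauchyMass_nonneg (d := d) (b := b)
  rw [cauchyAverage_eq_integral_halfSpaceKernel b φ hx, norm_mul, norm_inv,
    Real.norm_of_nonneg this, ← integral_mul_const]
  gcongr
  refine norm_integral_le_of_norm_le (hφi.abs.mul_const _) (.of_forall fun y => ?_)
  have kernel_nonneg : 0 ≤ halfSpaceKernel (2 * b - d) b x y := by
    unfold halfSpaceKernel
    positivity
  rw [norm_mul, Real.norm_eq_abs, Real.norm_of_nonneg kernel_nonneg]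
  by_cases hy : y ∈ tsupport φ
  · gcongr
    refine (halfSpaceKernel_le hb hx y).trans
      (Real.rpow_le_rpow_of_nonpos (sub_pos.2 hxR) ?_ (by simp))
    linarith [hR y hy, norm_sub_le_sqrt_sq_add_norm_sq x y]
  · simp [image_eq_zero_of_notMem_tsupport hy]

lemma exists_abs_le_of_hasCompactSupport_sub_const (hφ : Continuous φ) {c : ℝ}
    (hc : HasCompactSupport fun y => φ y - c) : ∃ C, ∀ y, |φ y| ≤ C := by
  obtain ⟨C, hC⟩ := (hφ.sub continuous_const).bounded_above_of_compact_support hc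
  refine ⟨C + |c|, fun y => ?_⟩
  have : |φ y - c| ≤ C := hC y
  linarith [abs_sub_abs_le_abs_sub (φ y) c]

lemma integrable_comp_add_smul_cauchyMeasure (hb : d < 2 * b) (hφ : Continuous φ) {C : ℝ}
    (hC : ∀ y, |φ y| ≤ C) (x : 𝔼 × ℝ) :
    Integrable (fun y => φ (x.1 + x.2 • y)) (cauchyMeasure d b) := by
  have := isProbabilityMeasure_cauchyMeasure hb
  exact (integrable_const C).mono' (by fun_prop) (.of_forall fun y => hC _)

lemma cauchyAverage_pos (hb : d < 2 * b) (hφ : Continuous φ) {C : ℝ} (hC : ∀ y, |φ y| ≤ C)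
    (hpos : ∀ y, 0 < φ y) (x : 𝔼 × ℝ) : 0 < cauchyAverage b φ x := by
  have := isProbabilityMeasure_cauchyMeasure hb
  exact integral_pos_of_forall_pos (fun y => hpos _)
    (integrable_comp_add_smul_cauchyMeasure hb hφ hC x)

lemma continuous_cauchyAverage (hb : d < 2 * b) (hφ : Continuous φ) {C : ℝ}
    (hC : ∀ y, |φ y| ≤ C) : Continuous (cauchyAverage b φ) := by
  have := isProbabilityMeasure_cauchyMeasure hb
  exact continuous_of_dominated (fun x => by fun_prop)
    (fun x => .of_forall fun y => hC _) (integrable_const C)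
    (.of_forall fun y => by fun_prop)

lemma cauchyAverage_eq_sub_const_add (hb : d < 2 * b) (hφ : Continuous φ) {c : ℝ}
    (hc : HasCompactSupport fun y => φ y - c) (x : 𝔼 × ℝ) :
    cauchyAverage b φ x = cauchyAverage b (fun y => φ y - c) x + c := by
  have := isProbabilityMeasure_cauchyMeasure hb
  obtain ⟨C, hC⟩ := exists_abs_le_of_hasCompactSupport_sub_const hφ hc
  rw [cauchyAverage, cauchyAverage, integral_sub
    (integrable_comp_add_smul_cauchyMeasure hb hφ hC x) (integrable_const c)]
  simp

lemma tendsto_cauchyAverage_cocompact (hd : 1 ≤ d) (hb : d < 2 * b) (hφ : Continuous φ) {c : ℝ}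
    (hc : HasCompactSupport fun y => φ y - c) :
    Tendsto (cauchyAverage b φ) (cocompact _ ⊓ 𝓟 {x | 0 < x.2}) (𝓝 c) := by
  have := tendsto_cauchyAverage_cocompact_zero hd hb.le (hφ.sub continuous_const) hc
  simpa only [Pi.sub_def, ← cauchyAverage_eq_sub_const_add hb hφ hc, zero_add] using
    this.add_const c

lemma hasHalfSpaceLaplacianAt_integral_halfSpaceKernel (α β : ℝ) (hφ : Continuous φ)
    (hc : HasCompactSupport φ) (hx : 0 < x.2) :
    HasHalfSpaceLaplacianAt (1 - α) (fun x => ∫ y, φ y * halfSpaceKernel α β x y)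
      (2 * β * (2 * β - α - d) * ∫ y, φ y * halfSpaceKernel α (β + 1) x y) x := by
  have := hasHalfSpaceLaplacianAt_integral_mul (μ := volume) hφ hc
    (isOpen_lt continuous_const continuous_snd) hx (contDiffOn_halfSpaceKernel α β)
    (hasHalfSpaceLaplacianAt_halfSpaceKernel α β hx)
  simpa only [mul_left_comm (φ _) (2 * β * (2 * β - α - d)), integral_const_mul] using this

lemma eventually_snd_pos (hx : 0 < x.2) : ∀ᶠ y : 𝔼 × ℝ in 𝓝 x, 0 < y.2 :=
  (isOpen_lt continuous_const continuous_snd).mem_nhds hx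

lemma hasHalfSpaceLaplacianAt_cauchyAverage (hb : d < 2 * b) (hφ : Continuous φ) {c : ℝ}
    (hc : HasCompactSupport fun y => φ y - c) (hx : 0 < x.2) :
    HasHalfSpaceLaplacianAt (1 - (2 * b - d)) (cauchyAverage b φ) 0 x := by
  have := ((hasHalfSpaceLaplacianAt_integral_halfSpaceKernel (2 * b - d) b
    (hφ.sub continuous_const) hc hx).const_mul (cauchyMass d b)⁻¹).add
      (hasHalfSpaceLaplacianAt_const _ c x)
  have heq : cauchyAverage b φ =ᶠ[𝓝 x] fun x =>
      (cauchyMass d b)⁻¹ * (∫ y, (φ y - c) * halfSpaceKernel (2 * b - d) b x y) + c := by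
    filter_upwards [eventually_snd_pos hx] with y hy
    rw [cauchyAverage_eq_sub_const_add hb hφ hc, cauchyAverage_eq_integral_halfSpaceKernel b _ hy]
  simpa using this.congr_of_eventuallyEq heq

lemma hasHalfSpaceLaplacianAt_sq_mul_cauchyAverage (hb : d < 2 * b) (hφ : Continuous φ)
    (hc : HasCompactSupport φ) (hx : 0 < x.2) :
    HasHalfSpaceLaplacianAt (1 - (2 * b - d)) (fun x => x.2 ^ 2 * cauchyAverage (b - 1) φ x)
      (-(4 * (b - 1) * (cauchyMass d b / cauchyMass d (b - 1))) * cauchyAverage b φ x) x := by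
  have hα : 2 * (b - 1) - d + 2 = 2 * b - d := by ring
  convert ((hasHalfSpaceLaplacianAt_integral_halfSpaceKernel (2 * b - d) (b - 1) hφ hc hx).const_mul
    (cauchyMass d (b - 1))⁻¹).congr_of_eventuallyEq ?_ using 1
  · have := (cauchyMass_pos hb).ne'
    rw [cauchyAverage_eq_integral_halfSpaceKernel b φ hx, sub_add_cancel]
    field_simp
    ring
  · filter_upwards [eventually_snd_pos hx] with y hy
    rw [cauchyAverage_eq_integral_halfSpaceKernel _ φ hy, mul_left_comm, ← integral_const_mul]
    simp only [mul_left_comm (y.2 ^ 2), sq_mul_halfSpaceKernel hy, hα]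

end CauchyAverage

section GradientOfAverage

variable {d : ℕ} {b : ℝ} {g : EuclideanSpace ℝ (Fin d) → ℝ} {x : EuclideanSpace ℝ (Fin d) × ℝ}

local notation "𝔼" => EuclideanSpace ℝ (Fin d)

lemma norm_gradient_eq (f : 𝔼 → ℝ) (x : 𝔼) : ‖∇ f x‖ = ‖fderiv ℝ f x‖ := by
  rw [← toDual_gradient, LinearIsometryEquiv.norm_map]

lemma continuous_gradient (hg : ContDiff ℝ 1 g) : Continuous (∇ g) :=
  (LinearIsometryEquiv.continuous _).comp (hg.continuous_fderiv one_ne_zero)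

lemma hasCompactSupport_gradient {c : ℝ} (hc : HasCompactSupport fun y => g y - c) :
    HasCompactSupport (∇ g) := by
  have : HasCompactSupport (fderiv ℝ g) := by
    simpa only [funext fun y => fderiv_sub_const (𝕜 := ℝ) (f := g) (x := y) c] using
      hc.fderiv (𝕜 := ℝ)
  exact this.comp_left (map_zero _)

lemma integrable_norm_cauchyMeasure (hb : d + 1 < 2 * b) :
    Integrable (fun y : 𝔼 => ‖y‖) (cauchyMeasure d b) := by
  simpa using integrable_norm_add_smul_rpow (d := d) (b := b) (κ := 1 / 2) (by norm_num)
    (by linarith) 0 1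

lemma hasLineDerivAt_cauchyAverage (hb : d + 1 < 2 * b) (hg : ContDiff ℝ 1 g) {L : ℝ}
    (hL : ∀ y, ‖∇ g y‖ ≤ L) (hgi : Integrable (fun y => g (x.1 + x.2 • y)) (cauchyMeasure d b))
    (v : 𝔼 × ℝ) :
    HasLineDerivAt ℝ (cauchyAverage b g)
      (∫ y, ⟪∇ g (x.1 + x.2 • y), v.1 + v.2 • y⟫ ∂cauchyMeasure d b) x v := by
  have := isProbabilityMeasure_cauchyMeasure (d := d) (b := b) (by linarith)
  have hgrad := continuous_gradient hg
  have hL0 : 0 ≤ L := (norm_nonneg _).trans (hL 0)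
  have hline (t : ℝ) (y : 𝔼) :
      HasDerivAt (fun t : ℝ => (x + t • v).1 + (x + t • v).2 • y) (v.1 + v.2 • y) t := by
    have hfst : HasDerivAt (fun t : ℝ => x.1 + t • v.1) v.1 t := by
      simpa using ((hasDerivAt_id t).smul_const v.1).const_add x.1
    have hsnd : HasDerivAt (fun t : ℝ => x.2 + t * v.2) v.2 t := by
      simpa using ((hasDerivAt_id t).mul_const v.2).const_add x.2
    exact hfst.add (hsnd.smul_const y)
  suffices h : HasDerivAt
      (fun t : ℝ => ∫ y, g ((x + t • v).1 + (x + t • v).2 • y) ∂cauchyMeasure d b)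
      (∫ y, ⟪∇ g ((x + (0 : ℝ) • v).1 + (x + (0 : ℝ) • v).2 • y), v.1 + v.2 • y⟫
        ∂cauchyMeasure d b) 0 by
    simpa only [HasLineDerivAt, cauchyAverage, zero_smul, add_zero] using h
  refine (hasDerivAt_integral_of_dominated_loc_of_deriv_le (μ := cauchyMeasure d b)
    (bound := fun y => L * (‖v.1‖ + |v.2| * ‖y‖)) (s := univ) (x₀ := (0 : ℝ))
    (F := fun t y => g ((x + t • v).1 + (x + t • v).2 • y))
    (F' := fun t y => ⟪∇ g ((x + t • v).1 + (x + t • v).2 • y), v.1 + v.2 • y⟫)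
    univ_mem ?_ ?_ ?_ ?_ ?_ ?_).2
  · exact .of_forall fun t =>
      (hg.continuous.comp (by fun_prop)).aestronglyMeasurable
  · simpa using hgi
  · exact ((hgrad.comp (by fun_prop)).inner (by fun_prop)).aestronglyMeasurable
  · refine .of_forall fun y t _ => (norm_inner_le_norm _ _).trans ?_
    gcongr
    · exact hL _
    · simpa [norm_smul] using norm_add_le v.1 (v.2 • y)
  · exact ((integrable_const _).add ((integrable_norm_cauchyMeasure hb).const_mul _)).const_mul _
  · refine .of_forall fun y t _ => ?_
    rw [inner_gradient_left]
    exact (hg.differentiable one_ne_zero _).hasFDerivAt.comp_hasDerivAt t (hline t y)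

lemma halfSpaceGradSq_cauchyAverage (hb : d + 1 < 2 * b) (hg : ContDiff ℝ 1 g) {L : ℝ}
    (hL : ∀ y, ‖∇ g y‖ ≤ L) (hgi : Integrable (fun y => g (x.1 + x.2 • y)) (cauchyMeasure d b)) :
    halfSpaceGradSq (cauchyAverage b g) x =
      ‖∫ y, ∇ g (x.1 + x.2 • y) ∂cauchyMeasure d b‖ ^ 2 +
        (∫ y, ⟪y, ∇ g (x.1 + x.2 • y)⟫ ∂cauchyMeasure d b) ^ 2 := by
  have := isProbabilityMeasure_cauchyMeasure (d := d) (b := b) (by linarith)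
  have hgrad : Integrable (fun y => ∇ g (x.1 + x.2 • y)) (cauchyMeasure d b) :=
    (integrable_const L).mono' ((continuous_gradient hg).comp (by fun_prop)).aestronglyMeasurable
      (.of_forall fun y => hL _)
  have coord (i : Fin d) : ∫ y, ∇ g (x.1 + x.2 • y) i ∂cauchyMeasure d b =
      (∫ y, ∇ g (x.1 + x.2 • y) ∂cauchyMeasure d b) i :=
    (EuclideanSpace.proj i : 𝔼 →L[ℝ] ℝ).integral_comp_comm hgrad
  simp only [halfSpaceGradSq, (hasLineDerivAt_cauchyAverage hb hg hL hgi _).lineDeriv,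
    Fintype.sum_option, halfSpaceFrame, zero_smul, add_zero, one_smul, zero_add,
    EuclideanSpace.inner_single_right, one_mul, conj_trivial, coord]
  simp only [EuclideanSpace.norm_sq_eq, Real.norm_eq_abs, sq_abs, real_inner_comm, add_comm]

end GradientOfAverage

section BecknerDeficit

variable {d : ℕ} {b p c : ℝ} {g : EuclideanSpace ℝ (Fin d) → ℝ}
  {x : EuclideanSpace ℝ (Fin d) × ℝ}

local notation "𝔼" => EuclideanSpace ℝ (Fin d)

/-- The density of the Beckner energy of `g`: up to a constant it is `‖∇ (g ^ (p / 2))‖ ^ 2`. -/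
noncomputable def becknerEnergyDensity (p : ℝ) (g : EuclideanSpace ℝ (Fin d) → ℝ)
    (y : EuclideanSpace ℝ (Fin d)) : ℝ :=
  g y ^ (p - 2) * ‖∇ g y‖ ^ 2

/-- The difference of the two sides of the Beckner inequality for `g ^ (p / 2)`, with `ν_b` replaced
by its image centered at `z` with scale `w`, as a function of `x = (z, w)`. The ratio of the masses
comes from absorbing the weight `1 + |y|²` into `ν_{b-1}`. -/
noncomputable def becknerDeficit (b p : ℝ) (g : EuclideanSpace ℝ (Fin d) → ℝ)
    (x : EuclideanSpace ℝ (Fin d) × ℝ) : ℝ :=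
  p * (p - 1) / (4 * (b - 1)) * (cauchyMass d (b - 1) / cauchyMass d b) *
      (x.2 ^ 2 * cauchyAverage (b - 1) (becknerEnergyDensity p g) x) +
    (cauchyAverage b g x ^ p - cauchyAverage b (fun y => g y ^ p) x)

lemma becknerEnergyDensity_nonneg (hpos : ∀ y, 0 < g y) (y : 𝔼) :
    0 ≤ becknerEnergyDensity p g y := by
  have := hpos y
  unfold becknerEnergyDensity
  positivity

lemma continuous_becknerEnergyDensity (p : ℝ) (hg : ContDiff ℝ 1 g) (hpos : ∀ y, 0 < g y) :
    Continuous (becknerEnergyDensity p g) :=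
  (hg.continuous.rpow_const fun y => Or.inl (hpos y).ne').mul ((continuous_gradient hg).norm.pow 2)

lemma hasCompactSupport_becknerEnergyDensity (p : ℝ) (hc : HasCompactSupport fun y => g y - c) :
    HasCompactSupport (becknerEnergyDensity p g) :=
  ((hasCompactSupport_gradient hc).comp_left (g := fun v => ‖v‖ ^ 2) (by simp)).mul_left

lemma hasCompactSupport_rpow_sub_const (p : ℝ) (hc : HasCompactSupport fun y => g y - c) :
    HasCompactSupport fun y => g y ^ p - c ^ p :=
  hc.mono fun y hy => by
    contrapose! hy
    simp [sub_eq_zero.1 (Function.notMem_support.1 hy)]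

lemma rpow_mul_halfSpaceGradSq_cauchyAverage_le (hd : 1 ≤ d) (hb : d + 1 ≤ b)
    (hp1 : 1 / (b - d) ≤ p - 1) (hp2 : p ≤ 2) (hg : ContDiff ℝ 1 g) (hpos : ∀ y, 0 < g y)
    (hc : HasCompactSupport fun y => g y - c) (x : 𝔼 × ℝ) :
    cauchyAverage b g x ^ (p - 2) * halfSpaceGradSq (cauchyAverage b g) x ≤
      cauchyAverage b (becknerEnergyDensity p g) x := by
  have hd' : (1 : ℝ) ≤ d := by exact_mod_cast hd
  have hb' : d < 2 * b := by linarith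
  have := isProbabilityMeasure_cauchyMeasure hb'
  have hgrad := continuous_gradient hg
  obtain ⟨C, hC⟩ := exists_abs_le_of_hasCompactSupport_sub_const hg.continuous hc
  obtain ⟨L, hL⟩ := hgrad.bounded_above_of_compact_support (hasCompactSupport_gradient hc)
  obtain ⟨M, hM⟩ := (continuous_becknerEnergyDensity p hg hpos).bounded_above_of_compact_support
    (hasCompactSupport_becknerEnergyDensity p hc)
  have hgi := integrable_comp_add_smul_cauchyMeasure hb' hg.continuous hC x
  have hgrad_comp : Continuous fun y => ∇ g (x.1 + x.2 • y) := hgrad.comp (by fun_prop)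
  have hgrad_int : Integrable (fun y => ∇ g (x.1 + x.2 • y)) (cauchyMeasure d b) :=
    (integrable_const L).mono' hgrad_comp.aestronglyMeasurable (.of_forall fun y => hL _)
  have hinner_int : Integrable (fun y => ⟪y, ∇ g (x.1 + x.2 • y)⟫) (cauchyMeasure d b) := by
    refine ((integrable_norm_cauchyMeasure (d := d) (b := b) (by linarith)).mul_const L).mono'
      (continuous_id.inner hgrad_comp).aestronglyMeasurable (.of_forall fun y => ?_)
    exact (norm_inner_le_norm _ _).trans (mul_le_mul_of_nonneg_left (hL _) (norm_nonneg y))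
  have hU := cauchyAverage_pos hb' hg.continuous hC hpos x
  have key := norm_sq_integral_add_sq_integral_inner_le hd hb hp1 hp2 (fun y => hpos _) hgi
    hgrad_int hinner_int (integrable_comp_add_smul_cauchyMeasure hb'
      (continuous_becknerEnergyDensity p hg hpos) hM x)
  rw [← halfSpaceGradSq_cauchyAverage (by linarith) hg hL hgi] at key
  calc cauchyAverage b g x ^ (p - 2) * halfSpaceGradSq (cauchyAverage b g) x
      ≤ cauchyAverage b g x ^ (p - 2) * (cauchyAverage b g x ^ (2 - p) *
          cauchyAverage b (becknerEnergyDensity p g) x) :=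
        mul_le_mul_of_nonneg_left key (by positivity)
    _ = cauchyAverage b (becknerEnergyDensity p g) x := by
        rw [← mul_assoc, ← Real.rpow_add hU]
        simp

lemma continuous_becknerDeficit (hb : d < 2 * (b - 1)) (hp : 0 ≤ p) (hg : ContDiff ℝ 1 g)
    (hpos : ∀ y, 0 < g y) (hc : HasCompactSupport fun y => g y - c) :
    Continuous (becknerDeficit b p g) := by
  have hgp : Continuous fun y => g y ^ p := hg.continuous.rpow_const fun y => Or.inr hp
  have hq := continuous_becknerEnergyDensity p hg hpos
  obtain ⟨C, hC⟩ := exists_abs_le_of_hasCompactSupport_sub_const hg.continuous hc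
  obtain ⟨D, hD⟩ := exists_abs_le_of_hasCompactSupport_sub_const hgp
    (hasCompactSupport_rpow_sub_const p hc)
  obtain ⟨M, hM⟩ := hq.bounded_above_of_compact_support
    (hasCompactSupport_becknerEnergyDensity p hc)
  exact (continuous_const.mul ((continuous_snd.pow 2).mul
    (continuous_cauchyAverage (by linarith) hq hM))).add
      (((continuous_cauchyAverage (by linarith) hg.continuous hC).rpow_const
        fun x => Or.inr hp).sub (continuous_cauchyAverage (by linarith) hgp hD))

lemma becknerDeficit_boundary (hb : d < 2 * b) (p : ℝ) (g : 𝔼 → ℝ) (z : 𝔼) :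
    becknerDeficit b p g (z, 0) = 0 := by
  simp [becknerDeficit, cauchyAverage_boundary hb]

lemma eventually_lt_becknerDeficit (hd : 1 ≤ d) (hb : d + 1 ≤ b) (hp : 1 ≤ p)
    (hg : ContDiff ℝ 1 g) (hpos : ∀ y, 0 < g y) (hc : HasCompactSupport fun y => g y - c)
    {δ : ℝ} (hδ : 0 < δ) :
    ∀ᶠ x in cocompact (𝔼 × ℝ) ⊓ 𝓟 {x | 0 < x.2}, -δ < becknerDeficit b p g x := by
  have hd' : (1 : ℝ) ≤ d := by exact_mod_cast hd
  have hb' : d < 2 * b := by linarith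
  have hp0 : 0 ≤ p := by linarith
  have hgp : Continuous fun y => g y ^ p := hg.continuous.rpow_const fun y => Or.inr hp0
  have hlim := ((tendsto_cauchyAverage_cocompact hd hb' hg.continuous hc).rpow_const
    (Or.inr hp0)).sub (tendsto_cauchyAverage_cocompact hd hb' hgp
      (hasCompactSupport_rpow_sub_const p hc))
  rw [sub_self] at hlim
  filter_upwards [hlim.eventually_const_lt (neg_lt_zero.2 hδ)] with x hx
  refine lt_add_of_nonneg_of_lt (mul_nonneg (mul_nonneg (div_nonneg ?_ ?_) ?_) ?_) hx
  · exact mul_nonneg hp0 (by linarith)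
  · linarith
  · exact div_nonneg cauchyMass_nonneg cauchyMass_nonneg
  · exact mul_nonneg (sq_nonneg _) (integral_nonneg fun y => becknerEnergyDensity_nonneg hpos _)

lemma exists_hasHalfSpaceLaplacianAt_becknerDeficit_nonpos (hd : 1 ≤ d) (hb : d + 1 ≤ b)
    (hp1 : 1 / (b - d) ≤ p - 1) (hp2 : p ≤ 2) (hg : ContDiff ℝ 1 g) (hpos : ∀ y, 0 < g y)
    (hc : HasCompactSupport fun y => g y - c) (hx : 0 < x.2) :
    ∃ L ≤ 0, HasHalfSpaceLaplacianAt (1 - (2 * b - d)) (becknerDeficit b p g) L x := by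
  have hd' : (1 : ℝ) ≤ d := by exact_mod_cast hd
  have hb' : d < 2 * b := by linarith
  have hp0 : 0 < p - 1 := (one_div_pos.2 (by linarith)).trans_le hp1
  have hgp : Continuous fun y => g y ^ p := hg.continuous.rpow_const fun y => Or.inl (hpos y).ne'
  obtain ⟨C, hC⟩ := exists_abs_le_of_hasCompactSupport_sub_const hg.continuous hc
  have hU := cauchyAverage_pos hb' hg.continuous hC hpos x
  have energy := (hasHalfSpaceLaplacianAt_sq_mul_cauchyAverage hb'
    (continuous_becknerEnergyDensity p hg hpos) (hasCompactSupport_becknerEnergyDensity p hc)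
      hx).const_mul (p * (p - 1) / (4 * (b - 1)) * (cauchyMass d (b - 1) / cauchyMass d b))
  have mean := (hasHalfSpaceLaplacianAt_cauchyAverage hb' hg.continuous hc hx).rpow_const hU p
  have mean_rpow := (hasHalfSpaceLaplacianAt_cauchyAverage hb' hgp
    (hasCompactSupport_rpow_sub_const p hc) hx).const_mul (-1)
  refine ⟨p * (p - 1) * (cauchyAverage b g x ^ (p - 2) * halfSpaceGradSq (cauchyAverage b g) x -
    cauchyAverage b (becknerEnergyDensity p g) x), ?_, ?_⟩
  · exact mul_nonpos_of_nonneg_of_nonpos (mul_nonneg (by linarith) hp0.le)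
      (sub_nonpos.2 (rpow_mul_halfSpaceGradSq_cauchyAverage_le hd hb hp1 hp2 hg hpos hc x))
  · have := (cauchyMass_pos hb').ne'
    have := (cauchyMass_pos (d := d) (b := b - 1) (by linarith)).ne'
    have : b - 1 ≠ 0 := by linarith
    convert energy.add (mean.add mean_rpow) using 1
    · funext x
      rw [becknerDeficit]
      ring
    · field_simp
      ring

theorem becknerDeficit_nonneg (hd : 1 ≤ d) (hb : d + 1 ≤ b) (hp1 : 1 / (b - d) ≤ p - 1)
    (hp2 : p ≤ 2) (hg : ContDiff ℝ 1 g) (hpos : ∀ y, 0 < g y)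
    (hc : HasCompactSupport fun y => g y - c) (hx : 0 ≤ x.2) : 0 ≤ becknerDeficit b p g x := by
  have hd' : (1 : ℝ) ≤ d := by exact_mod_cast hd
  have hp0 : 0 < p - 1 := (one_div_pos.2 (by linarith)).trans_le hp1
  exact nonneg_of_hasHalfSpaceLaplacianAt_nonpos (a := 1 - (2 * b - d)) (by linarith)
    (continuous_becknerDeficit (by linarith) (by linarith) hg hpos hc).continuousOn
    (fun z => (becknerDeficit_boundary (by linarith) p g z).ge)
    (fun δ hδ => eventually_lt_becknerDeficit hd hb (by linarith) hg hpos hc hδ)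
    (fun x hx => exists_hasHalfSpaceLaplacianAt_becknerDeficit_nonpos hd hb hp1 hp2 hg hpos hc hx)
    hx

end BecknerDeficit

section PositiveFunctions

variable {d : ℕ} {b p c : ℝ} {f : EuclideanSpace ℝ (Fin d) → ℝ}

local notation "𝔼" => EuclideanSpace ℝ (Fin d)

lemma becknerEnergyDensity_rpow_two_div (hp : p ≠ 0) {y : 𝔼} (hf : DifferentiableAt ℝ f y)
    (hy : 0 < f y) :
    becknerEnergyDensity p (fun x => f x ^ (2 / p)) y = 4 / p ^ 2 * ‖∇ f y‖ ^ 2 := by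
  have hderiv := (hf.hasFDerivAt.rpow_const (p := 2 / p) (Or.inl hy.ne')).fderiv
  have hcancel : f y ^ (2 / p * (p - 2)) * f y ^ ((2 / p - 1) * (2 : ℕ)) = 1 := by
    have hexp : 2 / p * (p - 2) + (2 / p - 1) * (2 : ℕ) = 0 := by
      push_cast
      field_simp
      ring
    rw [← Real.rpow_add hy, hexp, Real.rpow_zero]
  rw [becknerEnergyDensity, norm_gradient_eq, norm_gradient_eq, hderiv, norm_smul,
    Real.norm_eq_abs, mul_pow, sq_abs, mul_pow, ← Real.rpow_mul hy.le,
    ← Real.rpow_natCast (f y ^ (2 / p - 1)) 2, ← Real.rpow_mul hy.le]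
  linear_combination (4 / p ^ 2) * ‖fderiv ℝ f y‖ ^ 2 * hcancel

theorem beckner_of_pos_of_hasCompactSupport_sub_const (hd : 1 ≤ d) (hb : d + 1 ≤ b)
    (hp1 : 1 / (b - d) ≤ p - 1) (hp2 : p ≤ 2) (hf : ContDiff ℝ 1 f) (hpos : ∀ y, 0 < f y)
    (hc : HasCompactSupport fun y => f y - c) :
    p / (p - 1) * (∫ y, f y ^ 2 ∂cauchyMeasure d b -
        (∫ y, f y ^ (2 / p) ∂cauchyMeasure d b) ^ p) ≤
      1 / (b - 1) * ∫ y, ‖∇ f y‖ ^ 2 * (1 + ‖y‖ ^ 2) ∂cauchyMeasure d b := by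
  have hd' : (1 : ℝ) ≤ d := by exact_mod_cast hd
  have hp0 : 0 < p - 1 := (one_div_pos.2 (by linarith)).trans_le hp1
  have hp : 0 < p := by linarith
  have hb1 : b - 1 ≠ 0 := by linarith
  have hrpow (y : 𝔼) : (f y ^ (2 / p)) ^ p = f y ^ 2 := by
    rw [← Real.rpow_mul (hpos y).le, div_mul_cancel₀ _ hp.ne', Real.rpow_two]
  have hdeficit := becknerDeficit_nonneg hd hb hp1 hp2
    (hf.rpow_const_of_ne (p := 2 / p) fun y => (hpos y).ne')
    (fun y => Real.rpow_pos_of_pos (hpos y) _) (hasCompactSupport_rpow_sub_const _ hc)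
    (x := (0, 1)) zero_le_one
  simp only [becknerDeficit, cauchyAverage, zero_add, one_smul, one_pow, one_mul, hrpow,
    becknerEnergyDensity_rpow_two_div hp.ne' (hf.differentiable one_ne_zero _) (hpos _),
    integral_const_mul] at hdeficit
  rw [integral_mul_one_add_norm_sq_cauchyMeasure (by linarith), ← sub_nonneg]
  refine (mul_nonneg (div_nonneg hp.le hp0.le) hdeficit).trans_eq ?_
  field_simp
  ring

end PositiveFunctions

section Cutoff

lemma exists_cutoff_seq (E : Type*) [NormedAddCommGroup E] [NormedSpace ℝ E]
    [FiniteDimensional ℝ E] :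
    ∃ (χ : ℕ → E → ℝ) (K : ℝ), (∀ n, ContDiff ℝ 1 (χ n)) ∧ (∀ n, HasCompactSupport (χ n)) ∧
      (∀ n y, |χ n y| ≤ 1) ∧ (∀ y, ∀ᶠ n in atTop, χ n =ᶠ[𝓝 y] fun _ => 1) ∧
      ∀ n y, ‖fderiv ℝ (χ n) y‖ ^ 2 * (1 + ‖y‖ ^ 2) ≤ K := by
  let B : ContDiffBump (0 : E) := ⟨1, 2, one_pos, one_lt_two⟩
  obtain ⟨s, -, hs, hlim⟩ := exists_seq_strictAnti_tendsto' (zero_lt_one' ℝ)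
  have hB : ContDiff ℝ 1 B := B.contDiff
  obtain ⟨K, hK⟩ := (hB.continuous_fderiv one_ne_zero).bounded_above_of_compact_support
    (B.hasCompactSupport.fderiv ℝ)
  refine ⟨fun n y => B (s n • y), K ^ 2 * 5, fun n => hB.comp (contDiff_const_smul _),
    fun n => B.hasCompactSupport.comp_smul (hs n).1.ne', fun n y => ?_, fun y => ?_, fun n y => ?_⟩
  · rw [abs_of_nonneg B.nonneg]
    exact B.le_one
  · have hsmul : Tendsto (fun n => s n • y) atTop (𝓝 0) := by simpa using hlim.smul_const y
    filter_upwards [hsmul.eventually B.eventuallyEq_one.eventually_nhds] with n hn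
    exact (continuous_const_smul (s n)).continuousAt.eventually hn
  · rw [fderiv_comp_smul, norm_smul, Real.norm_eq_abs, abs_of_pos (hs n).1]
    by_cases hy : fderiv ℝ B (s n • y) = 0
    · rw [hy, norm_zero, mul_zero, sq, zero_mul, zero_mul]
      positivity
    have hsupp := support_fderiv_subset ℝ (f := (B : E → ℝ)) hy
    rw [B.tsupport_eq, mem_closedBall_zero_iff, norm_smul, Real.norm_eq_abs,
      abs_of_pos (hs n).1] at hsupp
    calc (s n * ‖fderiv ℝ B (s n • y)‖) ^ 2 * (1 + ‖y‖ ^ 2)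
        = ‖fderiv ℝ B (s n • y)‖ ^ 2 * (s n ^ 2 + (s n * ‖y‖) ^ 2) := by ring
      _ ≤ K ^ 2 * (1 ^ 2 + 2 ^ 2) := by
          have := (hs n).1.le
          gcongr
          exacts [hK _, (hs n).2.le]
      _ = K ^ 2 * 5 := by norm_num

variable {E : Type*} [NormedAddCommGroup E] [NormedSpace ℝ E]

lemma norm_fderiv_mul_sq_mul_le {χ f : E → ℝ} {y : E} {v K : ℝ} (hχ : DifferentiableAt ℝ χ y)
    (hf : DifferentiableAt ℝ f y) (hχ1 : |χ y| ≤ 1) (hv : 0 ≤ v)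
    (hK : ‖fderiv ℝ χ y‖ ^ 2 * v ≤ K) :
    ‖fderiv ℝ (fun x => χ x * f x) y‖ ^ 2 * v ≤
      2 * (‖fderiv ℝ f y‖ ^ 2 * v) + 2 * K * f y ^ 2 := by
  have hnorm : ‖fderiv ℝ (fun x => χ x * f x) y‖ ≤ ‖fderiv ℝ f y‖ + |f y| * ‖fderiv ℝ χ y‖ := by
    rw [fderiv_fun_mul hχ hf]
    refine (norm_add_le _ _).trans ?_
    rw [norm_smul, norm_smul, Real.norm_eq_abs, Real.norm_eq_abs]
    gcongr
    exact mul_le_of_le_one_left (norm_nonneg _) hχ1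
  calc ‖fderiv ℝ (fun x => χ x * f x) y‖ ^ 2 * v
      ≤ (2 * (‖fderiv ℝ f y‖ ^ 2 + (|f y| * ‖fderiv ℝ χ y‖) ^ 2)) * v := by
        gcongr
        exact (pow_le_pow_left₀ (norm_nonneg _) hnorm 2).trans add_sq_le
    _ = 2 * (‖fderiv ℝ f y‖ ^ 2 * v) + 2 * (‖fderiv ℝ χ y‖ ^ 2 * v) * f y ^ 2 := by
        rw [mul_pow, sq_abs]
        ring
    _ ≤ 2 * (‖fderiv ℝ f y‖ ^ 2 * v) + 2 * K * f y ^ 2 := by gcongr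

lemma norm_fderiv_sqrt_sq_add_sq_le {f : E → ℝ} {y : E} (hf : DifferentiableAt ℝ f y) {s : ℝ}
    (hs : 0 < s) :
    ‖fderiv ℝ (fun x => √(f x ^ 2 + s ^ 2)) y‖ ≤ ‖fderiv ℝ f y‖ := by
  have hpos : 0 < f y ^ 2 + s ^ 2 := by positivity
  have hsqrt : |f y| ≤ √(f y ^ 2 + s ^ 2) := Real.abs_le_sqrt (le_add_of_nonneg_right (sq_nonneg s))
  have hderiv := (((hf.hasFDerivAt.pow 2).add_const (s ^ 2)).sqrt hpos.ne').fderiv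
  rw [hderiv, smul_smul, norm_smul, Real.norm_eq_abs]
  refine mul_le_of_le_one_left (norm_nonneg _) ?_
  have hfactor : 1 / (2 * √(f y ^ 2 + s ^ 2)) * (2 • f y ^ (2 - 1)) = f y / √(f y ^ 2 + s ^ 2) := by
    simp only [Nat.add_one_sub_one, pow_one, nsmul_eq_mul, Nat.cast_ofNat]
    field_simp
  rw [hfactor, abs_div, abs_of_nonneg (Real.sqrt_nonneg _)]
  exact div_le_one_of_le₀ hsqrt (Real.sqrt_nonneg _)

end Cutoff

section Approximation

lemma rpow_le_one_add_sq {t q : ℝ} (ht : 0 ≤ t) (hq0 : 0 ≤ q) (hq2 : q ≤ 2) :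
    t ^ q ≤ 1 + t ^ 2 := by
  rcases le_total t 1 with h | h
  · exact (Real.rpow_le_one ht h hq0).trans (le_add_of_nonneg_right (sq_nonneg t))
  · calc t ^ q ≤ t ^ (2 : ℝ) := Real.rpow_le_rpow_of_exponent_le h hq2
      _ = t ^ 2 := Real.rpow_two t
      _ ≤ 1 + t ^ 2 := le_add_of_nonneg_left zero_le_one

lemma tendsto_integral_sq_sub_integral_rpow {α : Type*} [MeasurableSpace α] {μ : Measure α}
    [IsFiniteMeasure μ] {F : ℕ → α → ℝ} {f G : α → ℝ} {p : ℝ} (hp : 1 ≤ p)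
    (hF : ∀ n, AEStronglyMeasurable (F n) μ) (hG : Integrable G μ) (hle : ∀ n y, F n y ^ 2 ≤ G y)
    (hlim : ∀ y, Tendsto (fun n => F n y) atTop (𝓝 (f y))) :
    Tendsto (fun n => ∫ y, F n y ^ 2 ∂μ - (∫ y, |F n y| ^ (2 / p) ∂μ) ^ p) atTop
      (𝓝 (∫ y, f y ^ 2 ∂μ - (∫ y, |f y| ^ (2 / p) ∂μ) ^ p)) := by
  have hq0 : 0 ≤ 2 / p := by positivity
  have hq2 : 2 / p ≤ 2 := div_le_self zero_le_two hp
  refine Tendsto.sub (tendsto_integral_of_dominated_convergence G (fun n => (hF n).pow 2) hG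
    (fun n => .of_forall fun y => ?_) (.of_forall fun y => (hlim y).pow 2))
    (Tendsto.rpow_const (tendsto_integral_of_dominated_convergence (fun y => 1 + G y)
      (fun n => ?_) ((integrable_const 1).add hG) (fun n => .of_forall fun y => ?_)
      (.of_forall fun y => (hlim y).abs.rpow_const (Or.inr hq0))) (Or.inr (by linarith)))
  · simpa using hle n y
  · exact ((hF n).norm.aemeasurable.pow_const _).aestronglyMeasurable
  · rw [Real.norm_eq_abs, abs_of_nonneg (by positivity)]
    refine (rpow_le_one_add_sq (abs_nonneg _) hq0 hq2).trans ?_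
    simpa using hle n y

variable {d : ℕ} {b p : ℝ} {f : EuclideanSpace ℝ (Fin d) → ℝ}

local notation "𝔼" => EuclideanSpace ℝ (Fin d)

lemma continuous_norm_gradient_sq_mul (hf : ContDiff ℝ 1 f) :
    Continuous fun y => ‖∇ f y‖ ^ 2 * (1 + ‖y‖ ^ 2) :=
  ((continuous_gradient hf).norm.pow 2).mul (continuous_const.add (continuous_norm.pow 2))

lemma beckner_sqrt_sq_add_sq (hd : 1 ≤ d) (hb : d + 1 ≤ b) (hp1 : 1 / (b - d) ≤ p - 1)
    (hp2 : p ≤ 2) (hf : ContDiff ℝ 1 f) (hc : HasCompactSupport f) {s : ℝ} (hs : 0 < s) :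
    p / (p - 1) * (∫ y, √(f y ^ 2 + s ^ 2) ^ 2 ∂cauchyMeasure d b -
        (∫ y, |√(f y ^ 2 + s ^ 2)| ^ (2 / p) ∂cauchyMeasure d b) ^ p) ≤
      1 / (b - 1) * ∫ y, ‖∇ f y‖ ^ 2 * (1 + ‖y‖ ^ 2) ∂cauchyMeasure d b := by
  have hd' : (1 : ℝ) ≤ d := by exact_mod_cast hd
  have hb1 : 0 < b - 1 := by linarith
  have := isProbabilityMeasure_cauchyMeasure (d := d) (b := b) (by linarith)
  have hpos (y : 𝔼) : 0 < f y ^ 2 + s ^ 2 := by positivity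
  have hF : ContDiff ℝ 1 fun y => √(f y ^ 2 + s ^ 2) :=
    ((hf.pow 2).add contDiff_const).sqrt fun y => (hpos y).ne'
  have hFc : HasCompactSupport fun y => √(f y ^ 2 + s ^ 2) - s := hc.mono fun y hy => by
    contrapose! hy
    simp [Function.notMem_support.1 hy, hs.le]
  have hgrad_supp : HasCompactSupport (∇ f) :=
    hasCompactSupport_gradient (c := 0) (by simpa using hc)
  have henergy : Integrable (fun y => ‖∇ f y‖ ^ 2 * (1 + ‖y‖ ^ 2)) (cauchyMeasure d b) :=
    (continuous_norm_gradient_sq_mul hf).integrable_of_hasCompactSupport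
      (hgrad_supp.comp_left (g := fun v => ‖v‖ ^ 2) (by simp)).mul_right
  have hbeckner := beckner_of_pos_of_hasCompactSupport_sub_const hd hb hp1 hp2 hF
    (fun y => Real.sqrt_pos.2 (hpos y)) hFc
  simp only [abs_of_nonneg (Real.sqrt_nonneg _)]
  refine hbeckner.trans (mul_le_mul_of_nonneg_left ?_ (by positivity))
  refine integral_mono_of_nonneg (.of_forall fun y => by positivity) henergy
    (.of_forall fun y => ?_)
  simp only [norm_gradient_eq]
  gcongr
  exact norm_fderiv_sqrt_sq_add_sq_le (hf.differentiable one_ne_zero y) hs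

theorem beckner_of_hasCompactSupport (hd : 1 ≤ d) (hb : d + 1 ≤ b) (hp1 : 1 / (b - d) ≤ p - 1)
    (hp2 : p ≤ 2) (hf : ContDiff ℝ 1 f) (hc : HasCompactSupport f) :
    p / (p - 1) * (∫ y, f y ^ 2 ∂cauchyMeasure d b -
        (∫ y, |f y| ^ (2 / p) ∂cauchyMeasure d b) ^ p) ≤
      1 / (b - 1) * ∫ y, ‖∇ f y‖ ^ 2 * (1 + ‖y‖ ^ 2) ∂cauchyMeasure d b := by
  have hd' : (1 : ℝ) ≤ d := by exact_mod_cast hd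
  have hp0 : 0 < p - 1 := (one_div_pos.2 (by linarith)).trans_le hp1
  have := isProbabilityMeasure_cauchyMeasure (d := d) (b := b) (by linarith)
  obtain ⟨s, -, hs, hslim⟩ := exists_seq_strictAnti_tendsto' (zero_lt_one' ℝ)
  have hF (n : ℕ) : Continuous fun y => √(f y ^ 2 + s n ^ 2) :=
    ((hf.continuous.pow 2).add continuous_const).sqrt
  have hsq_supp : HasCompactSupport fun y => f y ^ 2 :=
    hc.comp_left (g := fun t => t ^ 2) (by simp)
  have hsq : Integrable (fun y => f y ^ 2) (cauchyMeasure d b) :=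
    (hf.continuous.pow 2).integrable_of_hasCompactSupport hsq_supp
  have hle (n : ℕ) (y : 𝔼) : √(f y ^ 2 + s n ^ 2) ^ 2 ≤ f y ^ 2 + 1 := by
    rw [Real.sq_sqrt (by positivity)]
    gcongr
    exact pow_le_one₀ (hs n).1.le (hs n).2.le
  have hlim (y : 𝔼) : Tendsto (fun n => √(f y ^ 2 + s n ^ 2)) atTop (𝓝 |f y|) := by
    rw [← Real.sqrt_sq_eq_abs]
    simpa using ((hslim.pow 2).const_add (f y ^ 2)).sqrt
  have hlhs := tendsto_integral_sq_sub_integral_rpow (p := p) (by linarith)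
    (fun n => (hF n).aestronglyMeasurable) (hsq.add (integrable_const 1)) hle hlim
  simp only [sq_abs, abs_abs] at hlhs
  exact le_of_tendsto' (hlhs.const_mul _) fun n =>
    beckner_sqrt_sq_add_sq hd hb hp1 hp2 hf hc (hs n).1

lemma tendsto_integral_norm_gradient_cutoff_mul {μ : Measure 𝔼} {χ : ℕ → 𝔼 → ℝ} {K : ℝ}
    (hχ : ∀ n, ContDiff ℝ 1 (χ n)) (hχ1 : ∀ n y, |χ n y| ≤ 1)
    (hχlim : ∀ y, ∀ᶠ n in atTop, χ n =ᶠ[𝓝 y] fun _ => 1)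
    (hχK : ∀ n y, ‖fderiv ℝ (χ n) y‖ ^ 2 * (1 + ‖y‖ ^ 2) ≤ K) (hf : ContDiff ℝ 1 f)
    (hsq : Integrable (fun y => f y ^ 2) μ)
    (henergy : Integrable (fun y => ‖∇ f y‖ ^ 2 * (1 + ‖y‖ ^ 2)) μ) :
    Tendsto (fun n => ∫ y, ‖∇ (fun x => χ n x * f x) y‖ ^ 2 * (1 + ‖y‖ ^ 2) ∂μ) atTop
      (𝓝 (∫ y, ‖∇ f y‖ ^ 2 * (1 + ‖y‖ ^ 2) ∂μ)) := by
  have hdom : Integrable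
      (fun y => 2 * (‖∇ f y‖ ^ 2 * (1 + ‖y‖ ^ 2)) + 2 * K * f y ^ 2) μ :=
    (henergy.const_mul 2).add (hsq.const_mul (2 * K))
  refine tendsto_integral_of_dominated_convergence _
    (fun n => (continuous_norm_gradient_sq_mul ((hχ n).mul hf)).aestronglyMeasurable) hdom
    (fun n => .of_forall fun y => ?_)
    (.of_forall fun y => tendsto_const_nhds.congr' ((hχlim y).mono fun n hn => ?_))
  · rw [Real.norm_eq_abs, abs_of_nonneg (by positivity), norm_gradient_eq, norm_gradient_eq]
    exact norm_fderiv_mul_sq_mul_le ((hχ n).differentiable one_ne_zero y)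
      (hf.differentiable one_ne_zero y) (hχ1 n y) (by positivity) (hχK n y)
  · have hcongr : (fun x => χ n x * f x) =ᶠ[𝓝 y] f := hn.mono fun x hx => by simp [hx]
    simp only [norm_gradient_eq, hcongr.fderiv_eq]

end Approximation

theorem cauchy_beckner_general (d : ℕ) (hd : 1 ≤ d) (b : ℝ) (hb : (d : ℝ) + 1 ≤ b)
    (p : ℝ) (hp : p ∈ Set.Icc (1 + 1 / (b - d)) 2)
    (f : EuclideanSpace ℝ (Fin d) → ℝ) (hf : ContDiff ℝ 1 f)
    (hsq : Integrable (fun y => f y ^ 2) (cauchyMeasure d b))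
    (henergy : Integrable (fun y => ‖∇ f y‖ ^ 2 * (1 + ‖y‖ ^ 2)) (cauchyMeasure d b)) :
    p / (p - 1) * (∫ y, f y ^ 2 ∂cauchyMeasure d b -
        (∫ y, |f y| ^ (2 / p) ∂cauchyMeasure d b) ^ p) ≤
      1 / (b - 1) * ∫ y, ‖∇ f y‖ ^ 2 * (1 + ‖y‖ ^ 2) ∂cauchyMeasure d b := by
  have hd' : (1 : ℝ) ≤ d := by exact_mod_cast hd
  have hp1 : 1 / (b - d) ≤ p - 1 := by linarith [hp.1]
  have hp0 : 0 < p - 1 := (one_div_pos.2 (by linarith)).trans_le hp1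
  have := isProbabilityMeasure_cauchyMeasure (d := d) (b := b) (by linarith)
  obtain ⟨χ, K, hχ, hχc, hχ1, hχlim, hχK⟩ := exists_cutoff_seq (EuclideanSpace ℝ (Fin d))
  have hF (n : ℕ) : ContDiff ℝ 1 fun y => χ n y * f y := (hχ n).mul hf
  have hFsq (n : ℕ) (y : EuclideanSpace ℝ (Fin d)) : (χ n y * f y) ^ 2 ≤ f y ^ 2 := by
    rw [mul_pow]
    exact mul_le_of_le_one_left (sq_nonneg _) ((sq_le_one_iff_abs_le_one _).2 (hχ1 n y))
  have hFlim (y : EuclideanSpace ℝ (Fin d)) : Tendsto (fun n => χ n y * f y) atTop (𝓝 (f y)) :=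
    tendsto_const_nhds.congr' ((hχlim y).mono fun n hn => by simp [hn.eq_of_nhds])
  have hlhs := tendsto_integral_sq_sub_integral_rpow (p := p) (by linarith)
    (fun n => (hF n).continuous.aestronglyMeasurable) hsq hFsq hFlim
  have hrhs := tendsto_integral_norm_gradient_cutoff_mul hχ hχ1 hχlim hχK hf hsq henergy
  exact le_of_tendsto_of_tendsto' (hlhs.const_mul _) (hrhs.const_mul _) fun n =>
    beckner_of_hasCompactSupport hd hb hp1 hp.2 (hF n) (hχc n).mul_right

/-- Beckner inequality for the Cauchy distribution: for `b ≥ d+1`,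
`p ∈ [1 + 1/(b−d), 2]`, and any smooth nonnegative `f` with the relevant integrals
finite, `(p/(p−1))[∫ f² dν_b − (∫ f^{2/p} dν_b)^p] ≤ (1/(b−1)) ∫ |∇f|²(1+|y|²) dν_b`. -/
theorem cauchy_beckner (d : ℕ) (hd : 1 ≤ d) (b : ℝ) (hb : (d : ℝ) + 1 ≤ b)
    (p : ℝ) (hp : p ∈ Set.Icc (1 + 1 / (b - d)) 2)
    (f : EuclideanSpace ℝ (Fin d) → ℝ) (hf : ContDiff ℝ (⊤ : ℕ∞) f) (hfpos : ∀ y, 0 ≤ f y)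
    (hint1 : Integrable (fun y => f y ^ 2) (cauchyMeasure d b))
    (hint2 : Integrable (fun y => f y ^ (2 / p)) (cauchyMeasure d b))
    (hint3 : Integrable (fun y => ‖gradient f y‖ ^ 2 * (1 + ‖y‖ ^ 2))
      (cauchyMeasure d b)) :
    p / (p - 1) *
        (∫ y, f y ^ 2 ∂(cauchyMeasure d b) -
          (∫ y, f y ^ (2 / p) ∂(cauchyMeasure d b)) ^ p) ≤
      1 / (b - 1) *
        ∫ y, ‖gradient f y‖ ^ 2 * (1 + ‖y‖ ^ 2) ∂(cauchyMeasure d b) := by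
  simpa only [abs_of_nonneg (hfpos _)] using
    cauchy_beckner_general d hd b hb p hp f (hf.of_le (by exact_mod_cast le_top)) hint1 hint3
end
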